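/- Let G be the one-relator group G = ⟨x₁,…,x_k, y₁,…,y_s | vu = 1⟩, where v is a nontrivial freely reduced word in x₁,…,x_k, u is a nontrivial freely reduced word in y₁,…,y_s, and u is not a proper power in the free group F(y₁,…,y_s). Then G is word hyperbolic and has property (Q). -/

import Mathlib

universe u v w

section Defs

variable {G : Type u} [Group G]

/-- A finite generating set closed under inversion. -/
def IsSymmGen (X : Set G) : Prop :=
  X.Finite ∧ (∀ x ∈ X, x⁻¹ ∈ X) ∧ Subgroup.closure X = ⊤

/-- Word length of `g` with respect to `X`. -/
noncomputable def wordLength (X : Set G) (g : G) : ℕ :=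
  sInf {n : ℕ | ∃ l : List G, l.length = n ∧ (∀ x ∈ l, x ∈ X) ∧ l.prod = g}

/-- Word metric. -/
noncomputable def wordDist (X : Set G) (g h : G) : ℕ :=
  wordLength X (g⁻¹ * h)

/-- Gromov product with respect to the word metric. -/
noncomputable def gromovProd (X : Set G) (x y w : G) : ℝ :=
  ((wordDist X x w : ℝ) + (wordDist X y w : ℝ) - (wordDist X x y : ℝ)) / 2

end Defs

/-- A group is word hyperbolic if for some finite symmetric generating set the Gromov
product satisfies the hyperbolicity inequality. -/
def IsWordHyperbolic (G : Type u) [Group G] : Prop :=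
  ∃ X : Set G, IsSymmGen X ∧ ∃ δ : ℝ, 0 ≤ δ ∧
    ∀ x y z w : G,
      gromovProd X x z w ≥ min (gromovProd X x y w) (gromovProd X y z w) - δ

/-- A subgroup is quasiconvex: it is finitely generated and word lengths distort linearly. -/
def IsQuasiconvex {G : Type u} [Group G] (A : Subgroup G) : Prop :=
  ∃ Y : Set ↥A, IsSymmGen Y ∧ ∃ X : Set G, IsSymmGen X ∧ ∃ c : ℝ, 0 < c ∧
    ∀ a : ↥A, (wordLength Y a : ℝ) ≤ c * (wordLength X (a : G) : ℝ) + c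

/-- Property (Q): every finitely generated subgroup is quasiconvex. -/
def HasPropertyQ (G : Type u) [Group G] : Prop :=
  ∀ H : Subgroup G, H.FG → IsQuasiconvex H

/-- A group is virtually cyclic if it has a cyclic subgroup of finite index. -/
def IsVirtuallyCyclic (C : Type u) [Group C] : Prop :=
  ∃ Z : Subgroup C, IsCyclic ↥Z ∧ Z.FiniteIndex

/-- `G` is the amalgamated free product of its subgroups `A` and `B` along `C`:
`C = A ⊓ B`, `A ⊔ B = ⊤` and `G` has the pushout universal property. -/
structure IsAmalgamatedFreeProduct {G : Type u} [Group G] (A B C : Subgroup G) : Prop where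
  le_left : C ≤ A
  le_right : C ≤ B
  inf_eq : A ⊓ B = C
  sup_eq_top : A ⊔ B = ⊤
  univ : ∀ (K : Type u) [Group K] (f : ↥A →* K) (g : ↥B →* K),
    (∀ (c : G) (hA : c ∈ A) (hB : c ∈ B), f ⟨c, hA⟩ = g ⟨c, hB⟩) →
    ∃ h : G →* K, (∀ a : ↥A, h a = f a) ∧ (∀ b : ↥B, h b = g b)

section Words

variable {G : Type u} [Group G]

/-- A word over the alphabet `X`. -/
def IsWordOver (X : Set G) (l : List G) : Prop := ∀ x ∈ l, x ∈ X

/-- A geodesic word over `X`. -/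
def IsGeodesicWord (X : Set G) (l : List G) : Prop :=
  IsWordOver X l ∧ l.length = wordLength X l.prod

/-- A `lam`-quasigeodesic word over `X`: every subword `v` satisfies
`l(v) ≤ lam * l_X(v̄) + lam`. -/
def IsQuasigeodesicWord (X : Set G) (lam : ℝ) (l : List G) : Prop :=
  IsWordOver X l ∧
    ∀ v : List G, v <:+: l → (v.length : ℝ) ≤ lam * (wordLength X v.prod : ℝ) + lam

/-- `g` is a shortest element of the subset `S` with respect to `wordLength X`. -/
def ShortestIn (X : Set G) (g : G) (S : Set G) : Prop :=
  g ∈ S ∧ ∀ s ∈ S, wordLength X g ≤ wordLength X s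

end Words

/-- `G` together with `ια, ιβ` is the pushout of `ℤ → A, 1 ↦ x` and `ℤ → B, 1 ↦ y`. -/
structure IsAmalgamOverZ {A : Type u} {B : Type v} {G : Type w}
    [Group A] [Group B] [Group G]
    (ια : A →* G) (ιβ : B →* G) (x : A) (y : B) : Prop where
  comm : ια x = ιβ y
  gen : ια.range ⊔ ιβ.range = ⊤
  univ : ∀ (K : Type (max u v w)) [Group K] (f : A →* K) (g : B →* K),
    f x = g y → ∃ h : G →* K, h.comp ια = f ∧ h.comp ιβ = g

/-!
`G` is the amalgamated product of two free groups over an infinite cyclic subgroup `⟨c⟩`. After a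
conjugation in each factor, `c` is represented by cyclically reduced words, and the balls whose
radii are the lengths of these words are generating sets of the factors for which powers of `c` are
geodesics and the factors are, up to a bounded error, rescaled trees. The word lengths of the two
factors agree on `⟨c⟩`, so each coset of a factor is isometrically embedded in `G`, and every path
crosses all the cosets of `⟨c⟩`, the edges of the Bass–Serre tree, that separate its end points.

As `u` is not a proper power, `⟨c⟩` is malnormal in its factor, so there two different cosets of
`⟨c⟩` run parallel only for a bounded time: one of them projects to a bounded part of the other.
Hence there are coarse projections to the cosets of `⟨c⟩` and of the factors. Any three points have
a median coset of a factor, which separates each two of them, and it separates a fourth point from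
at least two of them. Shortest paths between separated points pass near their projections to the
median coset, where the four-point inequality of a tree-like factor applies.

Let `H` be a finitely generated subgroup. If the stabiliser in `H` of a coset of `⟨c⟩` is infinite,
the coset stays close to `H` as soon as one of its points is; otherwise the part of it that is close
to `H` is bounded. So an excursion of a path near `H` out of a coset of a factor can be replaced by
a path along the edge through which it leaves, and, the factors being tree-like, geodesics of a
coset of a factor between points near `H` stay near `H`. Applied in each of the cosets of factors
that a geodesic of `G` from `1` to an element of `H` traverses, this writes the element as a product
of linearly many elements of `H` of bounded length.
-/

/-! ### Word metrics -/

section WordMetric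

variable {G : Type u} [Group G] {X : Set G}

theorem IsWordOver.wordLength_prod_le {l : List G} (hl : IsWordOver X l) :
    wordLength X l.prod ≤ l.length :=
  Nat.sInf_le ⟨l, rfl, hl, rfl⟩

theorem IsWordOver.append {α : Type u} {X : Set α} {l m : List α}
    (hl : IsWordOver X l) (hm : IsWordOver X m) :
    IsWordOver X (l ++ m) :=
  fun x hx => (List.mem_append.1 hx).elim (hl x) (hm x)

theorem IsWordOver.prod_mem_closure {l : List G} (hl : IsWordOver X l) :
    l.prod ∈ Subgroup.closure X :=
  Subgroup.list_prod_mem _ fun x hx => Subgroup.subset_closure (hl x hx)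

theorem exists_isGeodesicWord (hX : ∀ x ∈ X, x⁻¹ ∈ X) {g : G} (hg : g ∈ Subgroup.closure X) :
    ∃ l : List G, IsGeodesicWord X l ∧ l.prod = g := by
  suffices hne : {n : ℕ | ∃ l : List G, l.length = n ∧ IsWordOver X l ∧ l.prod = g}.Nonempty by
    obtain ⟨l, hlen, hl, rfl⟩ := Nat.sInf_mem hne
    exact ⟨l, ⟨hl, hlen⟩, rfl⟩
  rw [← Subgroup.mem_toSubmonoid, Subgroup.closure_toSubmonoid] at hg
  obtain ⟨l, hl, rfl⟩ := Submonoid.exists_list_of_mem_closure hg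
  exact ⟨l.length, l, rfl, fun x hx => (hl x hx).elim id fun h => by simpa using hX _ h, rfl⟩

theorem wordLength_one : wordLength X (1 : G) = 0 :=
  Nat.le_zero.1 (IsWordOver.wordLength_prod_le (l := []) (by simp [IsWordOver]))

theorem wordLength_le_one {x : G} (hx : x ∈ X) : wordLength X x ≤ 1 := by
  simpa using IsWordOver.wordLength_prod_le (l := [x]) (by simpa [IsWordOver] using hx)

theorem eq_one_of_wordLength_eq_zero (hX : ∀ x ∈ X, x⁻¹ ∈ X) {g : G}
    (hg : g ∈ Subgroup.closure X) (h : wordLength X g = 0) : g = 1 := by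
  obtain ⟨l, ⟨-, hlen⟩, rfl⟩ := exists_isGeodesicWord hX hg
  rw [List.length_eq_zero_iff.1 (hlen.trans h), List.prod_nil]

theorem wordLength_mul_le (hX : ∀ x ∈ X, x⁻¹ ∈ X) {g h : G} (hg : g ∈ Subgroup.closure X)
    (hh : h ∈ Subgroup.closure X) :
    wordLength X (g * h) ≤ wordLength X g + wordLength X h := by
  obtain ⟨l, ⟨hl, hllen⟩, rfl⟩ := exists_isGeodesicWord hX hg
  obtain ⟨m, ⟨hm, hmlen⟩, rfl⟩ := exists_isGeodesicWord hX hh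
  rw [← hllen, ← hmlen, ← List.prod_append, ← List.length_append]
  exact (hl.append hm).wordLength_prod_le

theorem wordLength_inv_le (hX : ∀ x ∈ X, x⁻¹ ∈ X) {g : G} (hg : g ∈ Subgroup.closure X) :
    wordLength X g⁻¹ ≤ wordLength X g := by
  obtain ⟨l, ⟨hl, hlen⟩, rfl⟩ := exists_isGeodesicWord hX hg
  have hinv : IsWordOver X (l.map (·⁻¹)).reverse := fun x hx => by
    obtain ⟨y, hy, rfl⟩ := List.mem_map.1 (List.mem_reverse.1 hx)
    exact hX y (hl y hy)
  simpa [List.prod_inv_reverse, hlen] using hinv.wordLength_prod_le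

theorem wordLength_inv (hX : ∀ x ∈ X, x⁻¹ ∈ X) {g : G} (hg : g ∈ Subgroup.closure X) :
    wordLength X g⁻¹ = wordLength X g :=
  (wordLength_inv_le hX hg).antisymm (by simpa using wordLength_inv_le hX (inv_mem hg))

theorem exists_wordLength_eq_add (hX : ∀ x ∈ X, x⁻¹ ∈ X) {g : G}
    (hg : g ∈ Subgroup.closure X) {k : ℕ} (hk : k ≤ wordLength X g) :
    ∃ z ∈ Subgroup.closure X, wordLength X z = k ∧ wordLength X (z⁻¹ * g) + k = wordLength X g := by
  obtain ⟨l, ⟨hl, hlen⟩, rfl⟩ := exists_isGeodesicWord hX hg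
  have htake : IsWordOver X (l.take k) := fun x hx => hl x (List.mem_of_mem_take hx)
  have hdrop : IsWordOver X (l.drop k) := fun x hx => hl x (List.mem_of_mem_drop hx)
  have htake_le := htake.wordLength_prod_le
  have hdrop_le := hdrop.wordLength_prod_le
  have hmul_le := wordLength_mul_le hX htake.prod_mem_closure hdrop.prod_mem_closure
  rw [List.length_take] at htake_le
  rw [List.length_drop] at hdrop_le
  rw [List.prod_take_mul_prod_drop] at hmul_le
  refine ⟨(l.take k).prod, htake.prod_mem_closure, by omega, ?_⟩
  rw [← List.prod_take_mul_prod_drop l k, inv_mul_cancel_left, List.prod_take_mul_prod_drop]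
  omega

theorem finite_setOf_wordLength_le (hfin : X.Finite) (hX : ∀ x ∈ X, x⁻¹ ∈ X) (n : ℕ) :
    {g : G | g ∈ Subgroup.closure X ∧ wordLength X g ≤ n}.Finite := by
  have : Finite X := hfin
  refine ((List.finite_length_le X n).image fun l => (l.map Subtype.val).prod).subset ?_
  rintro _ ⟨hg, hgn⟩
  obtain ⟨l, ⟨hl, hlen⟩, rfl⟩ := exists_isGeodesicWord hX hg
  lift l to List X using hl
  exact ⟨l, (List.length_map _).symm.trans_le (hlen.trans_le hgn), rfl⟩

theorem wordLength_image {H : Type v} [Group H] {f : G →* H} (hf : Function.Injective f)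
    (X : Set G) (g : G) : wordLength (f '' X) (f g) = wordLength X g := by
  unfold wordLength
  congr 1
  ext n
  constructor
  · rintro ⟨l, rfl, hl, hprod⟩
    obtain ⟨l, rfl⟩ : ∃ l' : List G, l'.map f = l :=
      (Set.range_list_map f).ge fun x hx => Set.image_subset_range f X (hl x hx)
    exact ⟨l, by simp, fun x hx => hf.mem_set_image.1 (hl _ (List.mem_map_of_mem hx)),
      hf (by rw [map_list_prod, hprod])⟩
  · rintro ⟨l, rfl, hl, rfl⟩
    exact ⟨l.map f, by simp, List.forall_mem_map.2 fun x hx => Set.mem_image_of_mem f (hl x hx),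
      (map_list_prod f l).symm⟩

theorem wordDist_mul_left (g x y : G) : wordDist X (g * x) (g * y) = wordDist X x y := by
  simp [wordDist, mul_assoc]

theorem wordDist_self (x : G) : wordDist X x x = 0 := by
  simp [wordDist, wordLength_one]

theorem IsSymmGen.mem_closure (hX : IsSymmGen X) (g : G) : g ∈ Subgroup.closure X :=
  hX.2.2 ▸ Subgroup.mem_top g

theorem IsSymmGen.wordDist_comm (hX : IsSymmGen X) (x y : G) :
    wordDist X x y = wordDist X y x := by
  simpa [wordDist] using wordLength_inv hX.2.1 (hX.mem_closure (y⁻¹ * x))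

theorem IsSymmGen.wordDist_triangle (hX : IsSymmGen X) (x y z : G) :
    wordDist X x z ≤ wordDist X x y + wordDist X y z := by
  simpa [wordDist, mul_assoc] using
    wordLength_mul_le hX.2.1 (hX.mem_closure (x⁻¹ * y)) (hX.mem_closure (y⁻¹ * z))

theorem IsSymmGen.eq_of_wordDist_eq_zero (hX : IsSymmGen X) {x y : G} (h : wordDist X x y = 0) :
    x = y :=
  inv_mul_eq_one.1 (eq_one_of_wordLength_eq_zero hX.2.1 (hX.mem_closure _) h)

theorem IsSymmGen.finite_setOf_wordDist_le (hX : IsSymmGen X) (x : G) (n : ℕ) :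
    {y | wordDist X x y ≤ n}.Finite :=
  ((finite_setOf_wordLength_le hX.1 hX.2.1 n).image (x * ·)).subset
    fun y hy => ⟨x⁻¹ * y, ⟨hX.mem_closure _, hy⟩, mul_inv_cancel_left x y⟩

/-- Gromov's four-point inequality with defect `K`, for the pairing `{x, z}, {y, w}`. -/
def FourPoint {α : Type*} (d : α → α → ℕ) (K : ℕ) (x y z w : α) : Prop :=
  d x z + d y w ≤ max (d x y + d z w) (d y z + d x w) + K

theorem fourPoint_iff {α : Type*} {d : α → α → ℕ} {K : ℕ} {x y z w : α} :
    FourPoint d K x y z w ↔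
      d x z + d y w ≤ d x y + d z w + K ∨ d x z + d y w ≤ d y z + d x w + K := by
  unfold FourPoint
  omega

theorem IsSymmGen.isWordHyperbolic_of_fourPoint (hX : IsSymmGen X) {K : ℕ}
    (h : ∀ x y z w, FourPoint (wordDist X) K x y z w) : IsWordHyperbolic G := by
  refine ⟨X, hX, K / 2, by positivity, fun x y z w => ?_⟩
  have hreal : (wordDist X x z : ℝ) + wordDist X y w ≤
      max ((wordDist X x y : ℝ) + wordDist X z w) (wordDist X y z + wordDist X x w) + K := by
    exact_mod_cast h x y z w
  simp only [gromovProd, ge_iff_le, sub_le_iff_le_add, min_le_iff]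
  rw [← sub_le_iff_le_add, le_max_iff] at hreal
  exact hreal.imp (fun _ => by linarith) fun _ => by linarith

end WordMetric

/-! ### Amalgamated products over an infinite cyclic group -/

/-- `x` and `y` lie in the same left coset of `K`. -/
abbrev SameCoset {G : Type u} [Group G] (K : Subgroup G) (x y : G) : Prop := x⁻¹ * y ∈ K

namespace SameCoset

variable {G : Type u} [Group G] {K K' : Subgroup G} {x y z : G}

theorem one_left_iff {g : G} : SameCoset K 1 g ↔ g ∈ K := by simp [SameCoset]

theorem refl (x : G) : SameCoset K x x := by simp [SameCoset, K.one_mem]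

theorem symm (h : SameCoset K x y) : SameCoset K y x := by
  simpa [SameCoset] using K.inv_mem h

theorem trans (h : SameCoset K x y) (h' : SameCoset K y z) : SameCoset K x z := by
  simpa [SameCoset, mul_assoc] using K.mul_mem h h'

theorem mono (hK : K ≤ K') (h : SameCoset K x y) : SameCoset K' x y := hK h

theorem mul_right {a : G} (ha : a ∈ K) : SameCoset K x (x * a) := by
  rwa [SameCoset, inv_mul_cancel_left]

end SameCoset

/-- `g` is a nonempty product of elements taken alternately from `V i \ V (!i)` and
`V (!i) \ V i`, the first one from `V i`. -/
inductive StartsIn {G : Type u} [Group G] (V : Bool → Subgroup G) : Bool → G → Prop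
  | single {i : Bool} {a : G} : a ∈ V i → a ∉ V (!i) → StartsIn V i a
  | cons {i : Bool} {a g : G} : a ∈ V i → a ∉ V (!i) → StartsIn V (!i) g → StartsIn V i (a * g)

/-- An amalgamated product of two groups over an infinite cyclic subgroup `⟨c⟩`, together with
finite generating sets of the two factors for which the word metrics are within bounded distance
of rescaled tree metrics and the powers of `c` form a geodesic line. In the factor `V true` the
subgroup `⟨c⟩` is malnormal. That `G` is the amalgamated product is expressed through the normal
form theorem: alternating products are not in `⟨c⟩` and determine the factor they start in. -/
structure CyclicAmalgam (G : Type u) [Group G] where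
  /-- The two factors. -/
  V : Bool → Subgroup G
  /-- The generator of the amalgamated subgroup. -/
  c : G
  /-- The generating sets of the factors. -/
  X : Bool → Set G
  /-- The tree length functions on the factors. -/
  treeLength : Bool → G → ℕ
  /-- The factors by which tree lengths exceed word lengths. -/
  scale : Bool → ℕ
  inf_le : V true ⊓ V false ≤ Subgroup.zpowers c
  sup_eq_top : V true ⊔ V false = ⊤
  not_startsIn_false : ∀ g, StartsIn V true g → ¬ StartsIn V false g
  notMem_zpowers : ∀ i g, StartsIn V i g → g ∉ Subgroup.zpowers c
  malnormal : ∀ b ∈ V true, ∀ n m : ℤ, n ≠ 0 → b * c ^ n * b⁻¹ = c ^ m → b ∈ Subgroup.zpowers c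
  finite_X : ∀ i, (X i).Finite
  inv_mem_X : ∀ i, ∀ x ∈ X i, x⁻¹ ∈ X i
  closure_X : ∀ i, Subgroup.closure (X i) = V i
  c_mem_X : ∀ i, c ∈ X i
  wordLength_zpow : ∀ i (n : ℤ), wordLength (X i) (c ^ n) = n.natAbs
  fourPoint_treeLength : ∀ i, ∀ x ∈ V i, ∀ y ∈ V i, ∀ z ∈ V i, ∀ w ∈ V i,
    FourPoint (fun a b => treeLength i (a⁻¹ * b)) 0 x y z w
  scale_pos : ∀ i, 0 < scale i
  treeLength_le : ∀ i, ∀ g ∈ V i, treeLength i g ≤ scale i * wordLength (X i) g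
  le_treeLength : ∀ i, ∀ g ∈ V i, scale i * wordLength (X i) g ≤ treeLength i g + scale i

namespace CyclicAmalgam

variable {G : Type u} [Group G] (S : CyclicAmalgam G)

/-- The amalgamated subgroup. -/
def C : Subgroup G := Subgroup.zpowers S.c

/-- `x` lies in `e⟨c⟩` or beyond it, on the side that starts with the factor `V j`. In the
Bass–Serre tree, the coset `e⟨c⟩` is an edge that separates the two sides. -/
def Beyond (j : Bool) (e x : G) : Prop := SameCoset S.C e x ∨ StartsIn S.V j (e⁻¹ * x)

variable {S}

theorem X_subset_V (i : Bool) : S.X i ⊆ S.V i := by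
  rw [← S.closure_X i]; exact Subgroup.subset_closure

theorem C_le_V (i : Bool) : S.C ≤ S.V i :=
  Subgroup.zpowers_le.2 (X_subset_V i (S.c_mem_X i))

theorem mem_C_of_mem_of_mem {i : Bool} {g : G} (h : g ∈ S.V i) (h' : g ∈ S.V (!i)) :
    g ∈ S.C := by
  cases i
  · exact S.inf_le ⟨h', h⟩
  · exact S.inf_le ⟨h, h'⟩

theorem sameCoset_V_of_C {i : Bool} {x y : G} (h : SameCoset S.C x y) : SameCoset (S.V i) x y :=
  h.mono (C_le_V i)

theorem sameCoset_mul_zpow (x : G) (n : ℤ) : SameCoset S.C x (x * S.c ^ n) :=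
  .mul_right (zpow_mem (Subgroup.mem_zpowers _) n)

theorem _root_.SameCoset.exists_eq_mul_zpow {x y : G} (h : SameCoset S.C x y) :
    ∃ n : ℤ, y = x * S.c ^ n := by
  obtain ⟨n, hn⟩ := h
  exact ⟨n, eq_mul_of_inv_mul_eq hn.symm⟩

theorem _root_.StartsIn.notMem_C {i : Bool} {g : G} (h : StartsIn S.V i g) : g ∉ S.C :=
  S.notMem_zpowers i g h

theorem _root_.StartsIn.not_startsIn {i : Bool} {g : G} (h : StartsIn S.V i g) :
    ¬ StartsIn S.V (!i) g := by
  cases i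
  · exact fun h' => S.not_startsIn_false g h' h
  · exact S.not_startsIn_false g h

theorem _root_.StartsIn.mul_left {i : Bool} {b g : G} (h : StartsIn S.V i g) (hb : b ∈ S.C) :
    StartsIn S.V i (b * g) := by
  have hmem : ∀ {a}, a ∈ S.V i → b * a ∈ S.V i := fun ha => mul_mem (C_le_V i hb) ha
  have hnotMem : ∀ {a}, a ∉ S.V (!i) → b * a ∉ S.V (!i) := fun ha =>
    (Subgroup.mul_mem_cancel_left _ (C_le_V _ hb)).not.2 ha
  cases h with
  | single ha ha' => exact .single (hmem ha) (hnotMem ha')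
  | cons ha ha' hg => exact mul_assoc b _ _ ▸ .cons (hmem ha) (hnotMem ha') hg

theorem Beyond.refl (j : Bool) (e : G) : S.Beyond j e e := Or.inl (.refl e)

theorem Beyond.change_base {j : Bool} {e e' x : G} (h : S.Beyond j e x)
    (he : SameCoset S.C e' e) : S.Beyond j e' x :=
  h.imp he.trans fun h => by simpa [mul_assoc] using h.mul_left he

theorem Beyond.mul_left {j : Bool} {e x : G} (h : S.Beyond j e x) (g : G) :
    S.Beyond j (g * e) (g * x) := by
  simpa [Beyond, SameCoset, mul_assoc] using h

theorem Beyond.not_startsIn {i : Bool} {e x : G} (h : S.Beyond i e x) :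
    ¬ StartsIn S.V (!i) (e⁻¹ * x) :=
  fun h' => h.elim h'.notMem_C fun h => h.not_startsIn h'

theorem Beyond.sameCoset {i : Bool} {e x : G} (h : S.Beyond i e x) (h' : S.Beyond (!i) e x) :
    SameCoset S.C e x :=
  h.elim id fun h => h'.resolve_right h.not_startsIn

theorem beyond_of_sameCoset {i : Bool} {e x : G} (h : SameCoset (S.V i) e x) :
    S.Beyond i e x := by
  by_cases h' : e⁻¹ * x ∈ S.V (!i)
  · exact Or.inl (mem_C_of_mem_of_mem h h')
  · exact Or.inr (.single h h')

theorem Beyond.startsIn_of_sameCoset {i : Bool} {e e' x : G} (h : S.Beyond (!i) e x)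
    (he : SameCoset (S.V i) e' e) (he' : ¬ SameCoset S.C e' e) : StartsIn S.V i (e'⁻¹ * x) := by
  have hnotMem : e'⁻¹ * e ∉ S.V (!i) := fun h => he' (mem_C_of_mem_of_mem he h)
  suffices StartsIn S.V i (e'⁻¹ * e * (e⁻¹ * x)) by simpa [mul_assoc] using this
  rcases h with hC | h
  · exact .single (mul_mem he (C_le_V _ hC))
      ((Subgroup.mul_mem_cancel_right _ (C_le_V _ hC)).not.2 hnotMem)
  · exact .cons he hnotMem h

theorem _root_.StartsIn.beyond_one_mul {i j : Bool} {g a : G} (h : StartsIn S.V i g)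
    (ha : a ∈ S.V j) : S.Beyond i 1 (g * a) := by
  induction h with
  | @single i g hg hg' =>
    obtain rfl | rfl := Bool.eq_or_eq_not j i
    · exact beyond_of_sameCoset (SameCoset.one_left_iff.2 (mul_mem hg ha))
    · by_cases ha' : a ∈ S.V i
      · exact beyond_of_sameCoset (SameCoset.one_left_iff.2 (mul_mem hg ha'))
      · exact Or.inr (by simpa using StartsIn.cons hg hg' (.single ha (by simpa using ha')))
  | @cons i b g hb hb' _ ih =>
    refine Or.inr (Beyond.startsIn_of_sameCoset (e := b) ?_ (SameCoset.one_left_iff.2 hb) fun h =>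
      hb' (C_le_V _ (SameCoset.one_left_iff.1 h)))
    simpa [mul_assoc] using ih.mul_left b

theorem _root_.StartsIn.beyond {i j : Bool} {e x y : G} (h : StartsIn S.V i (e⁻¹ * x))
    (hxy : SameCoset (S.V j) x y) : S.Beyond i e y := by
  simpa [mul_assoc] using (h.beyond_one_mul hxy).mul_left e

theorem Beyond.exists_of_sameCoset {i j : Bool} {e x y : G} (h : S.Beyond i e x)
    (hxy : SameCoset (S.V j) x y) : ∃ k, S.Beyond k e y :=
  h.elim (fun h => ⟨j, beyond_of_sameCoset ((sameCoset_V_of_C h).trans hxy)⟩)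
    fun h => ⟨i, h.beyond hxy⟩

theorem exists_beyond (e x : G) : ∃ j, S.Beyond j e x := by
  suffices h : ∀ g ∈ S.V true ⊔ S.V false, ∃ j, S.Beyond j e (e * g) by
    simpa using h (e⁻¹ * x) (S.sup_eq_top ▸ Subgroup.mem_top _)
  intro g hg
  rw [Subgroup.sup_eq_closure] at hg
  induction hg using Subgroup.closure_induction_right with
  | one => exact ⟨true, by simpa using Beyond.refl true e⟩
  | mul_right g _ a ha ih =>
    obtain ⟨j, hj⟩ := ih
    rw [← mul_assoc]
    exact ha.elim (fun ha => hj.exists_of_sameCoset (.mul_right ha))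
      fun ha => hj.exists_of_sameCoset (.mul_right ha)
  | mul_inv_cancel g _ a ha ih =>
    obtain ⟨j, hj⟩ := ih
    rw [← mul_assoc]
    exact ha.elim (fun ha => hj.exists_of_sameCoset (.mul_right (inv_mem ha)))
      fun ha => hj.exists_of_sameCoset (.mul_right (inv_mem ha))

theorem beyond_or_beyond_not (i : Bool) (e x : G) : S.Beyond i e x ∨ S.Beyond (!i) e x := by
  obtain ⟨j, hj⟩ := exists_beyond (S := S) e x
  obtain rfl | rfl := Bool.eq_or_eq_not j i
  · exact Or.inl hj
  · exact Or.inr hj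

theorem exists_adjacent (i : Bool) (o x : G) :
    ∃ e, SameCoset (S.V i) o e ∧ S.Beyond (!i) e x := by
  rcases beyond_or_beyond_not (S := S) i o x with (h | h) | h
  · exact ⟨x, sameCoset_V_of_C h, .refl _ x⟩
  · obtain ⟨g, rfl⟩ : ∃ g, x = o * g := ⟨_, (mul_inv_cancel_left o x).symm⟩
    rw [inv_mul_cancel_left] at h
    cases h with
    | single ha _ => exact ⟨_, .mul_right ha, .refl _ _⟩
    | cons ha _ hg => exact ⟨_, .mul_right ha, Or.inr (by simpa [mul_assoc] using hg)⟩
  · exact ⟨o, .refl o, h⟩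

/-! ### Word metrics of the factors -/

variable (S) in
/-- The union of the generating sets of the two factors. -/
def gens : Set G := S.X true ∪ S.X false

variable (S) in
/-- The word metric of the amalgam. -/
noncomputable abbrev d : G → G → ℕ := wordDist S.gens

theorem mem_gens {x : G} : x ∈ S.gens ↔ ∃ i, x ∈ S.X i := by
  simp [gens, or_comm]

theorem isSymmGen_gens : IsSymmGen S.gens where
  left := (S.finite_X _).union (S.finite_X _)
  right.left _ hx := mem_gens.2 ((mem_gens.1 hx).imp fun i => S.inv_mem_X i _)
  right.right := by rw [gens, Subgroup.closure_union, S.closure_X, S.closure_X, S.sup_eq_top]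

theorem d_mul_left (g x y : G) : S.d (g * x) (g * y) = S.d x y := wordDist_mul_left g x y

theorem d_self (x : G) : S.d x x = 0 := wordDist_self x

theorem d_comm (x y : G) : S.d x y = S.d y x := isSymmGen_gens.wordDist_comm x y

theorem d_triangle (x y z : G) : S.d x z ≤ S.d x y + S.d y z :=
  isSymmGen_gens.wordDist_triangle x y z

theorem eq_of_d_eq_zero {x y : G} (h : S.d x y = 0) : x = y :=
  isSymmGen_gens.eq_of_wordDist_eq_zero h

theorem finite_ball (x : G) (n : ℕ) : {y | S.d x y ≤ n}.Finite :=
  isSymmGen_gens.finite_setOf_wordDist_le x n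

theorem exists_append_sameCoset {i : Bool} {l : List G} (hl : IsWordOver S.gens l) {e x : G}
    (hx : S.Beyond i e x) (hxl : S.Beyond (!i) e (x * l.prod)) :
    ∃ l₁ l₂, l = l₁ ++ l₂ ∧ SameCoset S.C e (x * l₁.prod) := by
  induction l generalizing x with
  | nil => exact ⟨[], [], rfl, by simpa using hx.sameCoset (by simpa using hxl)⟩
  | cons y l ih =>
    rcases hx with hx | hx
    · exact ⟨[], y :: l, rfl, by simpa using hx⟩
    · obtain ⟨j, hj⟩ := mem_gens.1 (hl y (by simp))
      obtain ⟨l₁, l₂, rfl, h⟩ := ih (fun z hz => hl z (by simp [hz]))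
        (hx.beyond (.mul_right (X_subset_V j hj))) (by simpa [mul_assoc] using hxl)
      exact ⟨y :: l₁, l₂, rfl, by simpa [mul_assoc] using h⟩

theorem wordLength_X_eq_of_mem_C {g : G} (hg : g ∈ S.C) (i j : Bool) :
    wordLength (S.X i) g = wordLength (S.X j) g := by
  obtain ⟨n, rfl⟩ := hg
  exact (S.wordLength_zpow i n).trans (S.wordLength_zpow j n).symm

theorem wordLength_X_mul_le {i : Bool} {g h : G} (hg : g ∈ S.V i) (hh : h ∈ S.V i) :
    wordLength (S.X i) (g * h) ≤ wordLength (S.X i) g + wordLength (S.X i) h :=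
  wordLength_mul_le (S.inv_mem_X i) (by rwa [S.closure_X]) (by rwa [S.closure_X])

theorem wordLength_X_le_one {i : Bool} {y : G} (hy : y ∈ S.gens) (hyV : y ∈ S.V i) :
    wordLength (S.X i) y ≤ 1 := by
  obtain ⟨j, hj⟩ := mem_gens.1 hy
  obtain rfl | rfl := Bool.eq_or_eq_not j i
  · exact wordLength_le_one hj
  · rw [wordLength_X_eq_of_mem_C (mem_C_of_mem_of_mem hyV (X_subset_V _ hj)) i (!i)]
    exact wordLength_le_one hj

/- A letter outside `V i` starts a subword that leads out of `⟨c⟩` into the other factor and back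
to `⟨c⟩`; on `⟨c⟩` the word lengths of the two factors agree. -/
theorem wordLength_X_prod_le {i : Bool} {l : List G} (hl : IsWordOver S.gens l)
    (hlV : l.prod ∈ S.V i) : wordLength (S.X i) l.prod ≤ l.length := by
  induction hn : l.length using Nat.strong_induction_on generalizing i l with
  | h n ih =>
    subst hn
    cases l with
    | nil => simp [wordLength_one]
    | cons y l =>
      have hlX : IsWordOver S.gens l := fun z hz => hl z (by simp [hz])
      have hy : y ∈ S.gens := hl y (by simp)
      rw [List.prod_cons] at hlV ⊢
      by_cases hyi : y ∈ S.V i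
      · have hlV' : l.prod ∈ S.V i := (Subgroup.mul_mem_cancel_left _ hyi).1 hlV
        grw [wordLength_X_mul_le hyi hlV', wordLength_X_le_one hy hyi,
          ih _ (by simp) hlX hlV' rfl, List.length_cons, add_comm]
      · have hyj : y ∈ S.V (!i) := by
          obtain ⟨j, hj⟩ := mem_gens.1 hy
          obtain rfl | rfl := Bool.eq_or_eq_not j i
          · exact absurd (X_subset_V _ hj) hyi
          · exact X_subset_V _ hj
        obtain ⟨l₁, l₂, rfl, hC⟩ := exists_append_sameCoset (i := !i) (e := 1) hlX
          (beyond_of_sameCoset (SameCoset.one_left_iff.2 hyj))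
          (by simpa using beyond_of_sameCoset (SameCoset.one_left_iff.2 hlV))
        rw [SameCoset.one_left_iff] at hC
        rw [List.prod_append, ← mul_assoc] at hlV ⊢
        have hl₁ : l₁.prod ∈ S.V (!i) := (Subgroup.mul_mem_cancel_left _ hyj).1 (C_le_V _ hC)
        have hl₂ : l₂.prod ∈ S.V i := (Subgroup.mul_mem_cancel_left _ (C_le_V _ hC)).1 hlV
        grw [wordLength_X_mul_le (C_le_V i hC) hl₂, wordLength_X_eq_of_mem_C hC i (!i),
          wordLength_X_mul_le hyj hl₁, wordLength_X_le_one hy hyj,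
          ih l₁.length (by simp) (fun z hz => hlX z (by simp [hz])) hl₁ rfl,
          ih l₂.length (by simp) (fun z hz => hlX z (by simp [hz])) hl₂ rfl]
        simp only [List.length_cons, List.length_append]
        omega

theorem wordLength_gens_eq {i : Bool} {g : G} (hg : g ∈ S.V i) :
    wordLength S.gens g = wordLength (S.X i) g := by
  apply le_antisymm
  · obtain ⟨l, ⟨hl, hlen⟩, rfl⟩ := exists_isGeodesicWord (S.inv_mem_X i) (by rwa [S.closure_X])
    rw [← hlen]
    exact IsWordOver.wordLength_prod_le fun x hx => mem_gens.2 ⟨i, hl x hx⟩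
  · obtain ⟨l, ⟨hl, hlen⟩, rfl⟩ :=
      exists_isGeodesicWord isSymmGen_gens.2.1 (isSymmGen_gens.mem_closure g)
    rw [← hlen]
    exact wordLength_X_prod_le hl hg

theorem d_eq_wordLength_X {i : Bool} {x y : G} (h : SameCoset (S.V i) x y) :
    S.d x y = wordLength (S.X i) (x⁻¹ * y) :=
  wordLength_gens_eq h

theorem d_mul_zpow (g : G) (m n : ℤ) : S.d (g * S.c ^ m) (g * S.c ^ n) = (n - m).natAbs := by
  rw [d_eq_wordLength_X (i := true) (sameCoset_V_of_C
    ((sameCoset_mul_zpow g m).symm.trans (sameCoset_mul_zpow g n))), ← S.wordLength_zpow true]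
  congr 1
  group

theorem Beyond.exists_d_add_eq {i : Bool} {e x y : G} (hx : S.Beyond i e x)
    (hy : S.Beyond (!i) e y) : ∃ q, SameCoset S.C e q ∧ S.d x y = S.d x q + S.d q y := by
  obtain ⟨l, ⟨hl, hlen⟩, hprod⟩ :=
    exists_isGeodesicWord isSymmGen_gens.2.1 (isSymmGen_gens.mem_closure (x⁻¹ * y))
  obtain rfl : y = x * l.prod := by rw [hprod, mul_inv_cancel_left]
  obtain ⟨l₁, l₂, rfl, hq⟩ := exists_append_sameCoset hl hx hy
  refine ⟨x * l₁.prod, hq, (d_triangle _ _ _).antisymm ?_⟩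
  have h₁ : wordLength S.gens l₁.prod ≤ l₁.length :=
    IsWordOver.wordLength_prod_le fun z hz => hl z (by simp [hz])
  have h₂ : wordLength S.gens l₂.prod ≤ l₂.length :=
    IsWordOver.wordLength_prod_le fun z hz => hl z (by simp [hz])
  rw [List.length_append, List.prod_append] at hlen
  simpa [wordDist, ← hlen] using add_le_add h₁ h₂

theorem exists_between {i : Bool} {x y : G} (h : SameCoset (S.V i) x y) {k : ℕ}
    (hk : k ≤ S.d x y) :
    ∃ z, SameCoset (S.V i) x z ∧ S.d x z = k ∧ S.d z y + k = S.d x y := by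
  rw [d_eq_wordLength_X h] at hk ⊢
  obtain ⟨z, hz, hzk, hzy⟩ := exists_wordLength_eq_add (S.inv_mem_X i) (by rwa [S.closure_X]) hk
  rw [S.closure_X] at hz
  have hxz : SameCoset (S.V i) x (x * z) := .mul_right hz
  refine ⟨x * z, hxz, ?_, ?_⟩
  · rwa [d_eq_wordLength_X hxz, inv_mul_cancel_left]
  · rwa [d_eq_wordLength_X (hxz.symm.trans h), mul_inv_rev, mul_assoc]

theorem treeLength_le_d {i : Bool} {x y : G} (h : SameCoset (S.V i) x y) :
    S.treeLength i (x⁻¹ * y) ≤ S.scale i * S.d x y := by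
  rw [d_eq_wordLength_X h]; exact S.treeLength_le i _ h

theorem d_le_treeLength {i : Bool} {x y : G} (h : SameCoset (S.V i) x y) :
    S.scale i * S.d x y ≤ S.treeLength i (x⁻¹ * y) + S.scale i := by
  rw [d_eq_wordLength_X h]; exact S.le_treeLength i _ h

theorem fourPoint_treeLength_of_sameCoset {i : Bool} {o x y z w : G}
    (hx : SameCoset (S.V i) o x) (hy : SameCoset (S.V i) o y) (hz : SameCoset (S.V i) o z)
    (hw : SameCoset (S.V i) o w) :
    FourPoint (fun a b => S.treeLength i (a⁻¹ * b)) 0 x y z w := by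
  simpa [FourPoint, mul_assoc] using S.fourPoint_treeLength i _ hx _ hy _ hz _ hw

theorem fourPoint_of_sameCoset {i : Bool} {o x y z w : G}
    (hx : SameCoset (S.V i) o x) (hy : SameCoset (S.V i) o y) (hz : SameCoset (S.V i) o z)
    (hw : SameCoset (S.V i) o w) : FourPoint S.d 2 x y z w := by
  have hfour := fourPoint_treeLength_of_sameCoset hx hy hz hw
  have hxz := d_le_treeLength (hx.symm.trans hz)
  have hyw := d_le_treeLength (hy.symm.trans hw)
  have hxy := treeLength_le_d (hx.symm.trans hy)
  have hzw := treeLength_le_d (hz.symm.trans hw)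
  have hyz := treeLength_le_d (hy.symm.trans hz)
  have hxw := treeLength_le_d (hx.symm.trans hw)
  refine le_of_mul_le_mul_left ?_ (S.scale_pos i)
  rw [FourPoint] at hfour
  rw [mul_add, mul_add, ← Nat.mul_max_mul_left, mul_add, mul_add]
  omega

/-! ### Projections to cosets -/

theorem d_right_mul_zpow (p : G) (n : ℤ) : S.d p (p * S.c ^ n) = n.natAbs := by
  simpa using d_mul_zpow (S := S) p 0 n

theorem exists_direction_zpow {p q : G} (h : SameCoset S.C p q) :
    ∃ ε : ℤˣ, ∀ k : ℕ, k ≤ S.d p q →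
      S.d p (p * S.c ^ (ε * k : ℤ)) = k ∧ S.d (p * S.c ^ (ε * k : ℤ)) q + k = S.d p q := by
  obtain ⟨n, rfl⟩ := h.exists_eq_mul_zpow
  simp only [d_mul_zpow, d_right_mul_zpow]
  rcases le_total 0 n with hn | hn
  · exact ⟨1, fun k hk => by simp only [Units.val_one]; omega⟩
  · exact ⟨-1, fun k hk => by simp only [Units.val_neg, Units.val_one]; omega⟩

variable (S) in
/-- `p` is a coarse projection of `x` to the coset `oK`: up to an error `κ`, shortest paths from
`x` to the points of `oK` may be taken through `p`. -/
def IsGate (K : Subgroup G) (κ : ℕ) (o x p : G) : Prop :=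
  SameCoset K o p ∧ ∀ y, SameCoset K o y → S.d x p + S.d p y ≤ S.d x y + κ

theorem isGate_self {K : Subgroup G} {o x : G} (κ : ℕ) (hx : SameCoset K o x) :
    S.IsGate K κ o x x :=
  ⟨hx, fun y _ => by rw [d_self]; omega⟩

theorem IsGate.d_le {K : Subgroup G} {κ : ℕ} {o x p p' : G} (h : S.IsGate K κ o x p)
    (h' : S.IsGate K κ o x p') : S.d p p' ≤ κ := by
  have hp' := h.2 p' h'.1
  have hp := h'.2 p h.1
  rw [d_comm p' p] at hp
  omega

theorem IsGate.mono {K : Subgroup G} {κ κ' : ℕ} {o x p : G} (h : S.IsGate K κ o x p)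
    (hκ : κ ≤ κ') : S.IsGate K κ' o x p :=
  ⟨h.1, fun y hy => (h.2 y hy).trans (by omega)⟩

theorem IsGate.change_base {K : Subgroup G} {κ : ℕ} {o o' x p : G} (h : S.IsGate K κ o x p)
    (ho : SameCoset K o' o) : S.IsGate K κ o' x p :=
  ⟨ho.trans h.1, fun y hy => h.2 y (ho.symm.trans hy)⟩

theorem IsGate.of_beyond {i : Bool} {κ : ℕ} {o e x p : G} (h : S.IsGate S.C κ e x p)
    (he : SameCoset (S.V i) o e) (hx : S.Beyond (!i) e x) : S.IsGate (S.V i) κ o x p := by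
  refine ⟨he.trans (sameCoset_V_of_C h.1), fun y hy => ?_⟩
  obtain ⟨q, hq, hd⟩ := hx.exists_d_add_eq
    (by simpa using beyond_of_sameCoset (he.symm.trans hy))
  have hpq := h.2 q hq
  have htri := d_triangle (S := S) p q y
  omega

theorem IsGate.comp {i : Bool} {κ κ' : ℕ} {o x p q : G} (h : S.IsGate (S.V i) κ o x p)
    (h' : S.IsGate S.C κ' o p q) : S.IsGate S.C (κ + κ') o x q := by
  refine ⟨h'.1, fun y hy => ?_⟩
  have hxy := h.2 y (sameCoset_V_of_C hy)
  have hpy := h'.2 y hy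
  have htri := d_triangle (S := S) x p q
  omega

theorem exists_gate_of_mem {i : Bool} {o x : G} (hx : SameCoset (S.V i) o x) :
    ∃ p, S.IsGate S.C 5 o x p := by
  obtain ⟨p, hp, hmin⟩ : ∃ p, SameCoset S.C o p ∧ ∀ q, SameCoset S.C o q → S.d x p ≤ S.d x q := by
    refine ⟨_, sameCoset_mul_zpow o (Function.argmin fun n : ℤ => S.d x (o * S.c ^ n)), ?_⟩
    intro q hq
    obtain ⟨n, rfl⟩ := hq.exists_eq_mul_zpow
    exact Function.argmin_le (fun n : ℤ => S.d x (o * S.c ^ n)) n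
  refine ⟨p, hp, fun q hq => ?_⟩
  have hpq := hmin q hq
  by_cases hfar : 3 ≤ S.d p q
  · obtain ⟨ε, hε⟩ := exists_direction_zpow (hp.symm.trans hq)
    obtain ⟨hpm, hmq⟩ := hε 3 hfar
    have hm := hp.trans (sameCoset_mul_zpow p (ε * (3 : ℕ)))
    have hpm' := hmin _ hm
    have hfour := fourPoint_of_sameCoset (i := i) hx (sameCoset_V_of_C hp) (sameCoset_V_of_C hm)
      (sameCoset_V_of_C hq)
    rw [FourPoint] at hfour
    omega
  · omega

theorem gate_dichotomy {i : Bool} {o x y p q : G} (hx : SameCoset (S.V i) o x)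
    (hy : SameCoset (S.V i) o y) (hp : S.IsGate S.C 5 o x p) (hq : S.IsGate S.C 5 o y q) :
    S.d p q ≤ 6 ∨ S.d x p + S.d p q + S.d q y ≤ S.d x y + 12 := by
  have hxq := hp.2 q hq.1
  have hyp := hq.2 p hp.1
  have hfour := fourPoint_of_sameCoset hx hy (sameCoset_V_of_C (i := i) hq.1)
    (sameCoset_V_of_C hp.1)
  rw [FourPoint] at hfour
  rw [d_comm q p] at *
  rw [d_comm q y] at *
  omega

theorem d_le_of_parallel {i : Bool} {o y y' p p' q r : G} {t : ℕ} (hy : SameCoset (S.V i) o y)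
    (hy' : SameCoset (S.V i) o y') (hq : SameCoset (S.V i) o q) (hr : SameCoset (S.V i) o r)
    (h : S.d y p + S.d p p' + S.d p' y' ≤ S.d y y' + 12)
    (hpq : S.d p q = t) (hqp' : S.d q p' + t = S.d p p')
    (hyr : S.d y r = S.d y p + t) (hry' : S.d r y' + (S.d y p + t) = S.d y y') :
    S.d r q ≤ 14 := by
  have hfour := fourPoint_of_sameCoset hy hq hy' hr
  have hyq := d_triangle (S := S) y p q
  have hqy' := d_triangle (S := S) q p' y'
  have hrq := d_comm (S := S) r q
  have hry := d_comm (S := S) r y'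
  rw [FourPoint] at hfour
  omega

theorem sameCoset_of_fellow_travel {r p : G} (hrp : SameCoset (S.V true) r p) (η ε : ℤˣ) {R : ℕ}
    (h : ∀ t : ℕ, t ≤ {g | S.d 1 g ≤ R}.ncard →
      S.d (r * S.c ^ (η * t : ℤ)) (p * S.c ^ (ε * t : ℤ)) ≤ R) :
    SameCoset S.C r p := by
  let g : ℕ → G := fun t => (r * S.c ^ (η * t : ℤ))⁻¹ * (p * S.c ^ (ε * t : ℤ))
  obtain ⟨t, -, s, -, hts, hg⟩ := Set.exists_ne_map_eq_of_ncard_lt_of_maps_to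
    (s := Set.Iic {g | S.d 1 g ≤ R}.ncard) (t := {g | S.d 1 g ≤ R}) (f := g)
    (by simp) (fun t ht => by simpa [wordDist, g] using h t ht) (finite_ball 1 R)
  refine S.malnormal _ hrp (ε * (t - s)) (η * (t - s)) ?_ ?_
  · exact mul_ne_zero ε.ne_zero (sub_ne_zero.2 (by exact_mod_cast hts))
  · have hrel : r⁻¹ * p * S.c ^ (ε * t : ℤ) =
        S.c ^ (η * t : ℤ) * (S.c ^ (-(η * s) : ℤ) * (r⁻¹ * p) * S.c ^ (ε * s : ℤ)) := by
      have := congrArg (S.c ^ (η * t : ℤ) * ·) hg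
      simpa [g, mul_assoc, zpow_neg] using this
    rw [mul_sub, zpow_sub, ← mul_assoc, hrel]
    group

theorem exists_forall_d_gate_le : ∃ N, ∀ o e y y' p p' : G, SameCoset (S.V true) o e →
    ¬ SameCoset S.C o e → SameCoset S.C e y → SameCoset S.C e y' → S.IsGate S.C 5 o y p →
    S.IsGate S.C 5 o y' p' → S.d p p' ≤ N := by
  refine ⟨{g | S.d 1 g ≤ 14}.ncard + 12, fun o e y y' p p' he heC hy hy' hp hp' => ?_⟩
  by_contra! hlong
  have hyV : SameCoset (S.V true) o y := he.trans (sameCoset_V_of_C hy)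
  have hyV' : SameCoset (S.V true) o y' := he.trans (sameCoset_V_of_C hy')
  have hpass := (gate_dichotomy hyV hyV' hp hp').resolve_left (by omega)
  obtain ⟨ε, hε⟩ := exists_direction_zpow (hp.1.symm.trans hp'.1)
  obtain ⟨η, hη⟩ := exists_direction_zpow (hy.symm.trans hy')
  set r := y * S.c ^ (η * S.d y p : ℤ) with hr
  have hyr : SameCoset S.C y r := sameCoset_mul_zpow _ _
  have hrV : SameCoset (S.V true) o r := hyV.trans (sameCoset_V_of_C hyr)
  refine heC (hp.1.trans (.trans (.symm ?_) (hy.trans hyr).symm))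
  refine sameCoset_of_fellow_travel (R := 14) (hrV.symm.trans (sameCoset_V_of_C hp.1)) η ε
    fun t ht => ?_
  obtain ⟨hpq, hqp'⟩ := hε t (by omega)
  obtain ⟨hyr, hry'⟩ := hη (S.d y p + t) (by omega)
  have hrt : y * S.c ^ (η * (S.d y p + t : ℕ) : ℤ) = r * S.c ^ (η * t : ℤ) := by
    rw [hr, mul_assoc, ← zpow_add, Nat.cast_add, mul_add]
  rw [hrt] at hyr hry'
  exact d_le_of_parallel hyV hyV' (sameCoset_V_of_C (hp.1.trans (sameCoset_mul_zpow p _)))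
    (hrV.trans (sameCoset_V_of_C (sameCoset_mul_zpow r _))) hpass hpq hqp' hyr hry'

variable (S) in
/-- In the malnormal factor, everything beyond a coset `e⟨c⟩` projects, up to the error `κ`, to a
single point of any other coset `o⟨c⟩`. -/
def ProjectsToPoints (κ : ℕ) : Prop :=
  ∀ o e, SameCoset (S.V true) o e → ¬ SameCoset S.C o e →
    ∃ p, ∀ x, S.Beyond false e x → S.IsGate S.C κ o x p

variable (S) in
/-- All points on either side of a coset of `⟨c⟩` project to it, up to the error `κ`. -/
def HasGates (κ : ℕ) : Prop :=
  ∀ j o x, S.Beyond j o x → ∃ p, S.IsGate S.C κ o x p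

theorem exists_projectsToPoints : ∃ κ, S.ProjectsToPoints κ := by
  obtain ⟨N, hN⟩ := exists_forall_d_gate_le (S := S)
  refine ⟨5 + 2 * N, fun o e he heC => ?_⟩
  obtain ⟨p, hp⟩ := exists_gate_of_mem he
  refine ⟨p, fun x hx => ⟨hp.1, fun q hq => ?_⟩⟩
  obtain ⟨y, hy, hd⟩ := hx.exists_d_add_eq
    (beyond_of_sameCoset (i := true) (he.symm.trans (sameCoset_V_of_C hq)))
  obtain ⟨p', hp'⟩ := exists_gate_of_mem (he.trans (sameCoset_V_of_C hy))
  have hpp' := hN o e e y p p' he heC (.refl e) hy hp hp'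
  have hyq := hp'.2 q hq
  have hyp := d_triangle (S := S) y p' p
  have hpq := d_triangle (S := S) p p' q
  have hxp := d_triangle (S := S) x y p
  rw [d_comm p' p] at hyp
  omega

theorem ProjectsToPoints.hasGates {κ : ℕ} (hκ : S.ProjectsToPoints κ) : S.HasGates (κ + 5) := by
  have htrue : ∀ o x, S.Beyond true o x → ∃ p, S.IsGate S.C κ o x p := by
    intro o x hx
    obtain ⟨e, he, hex⟩ := exists_adjacent (S := S) true o x
    by_cases heC : SameCoset S.C o e
    · exact ⟨x, isGate_self κ (hx.sameCoset (hex.change_base heC))⟩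
    · exact (hκ o e he heC).imp fun p hp => hp x hex
  rintro (_ | _) o x hx
  · obtain ⟨e, he, hex⟩ := exists_adjacent (S := S) false o x
    obtain ⟨p, hp⟩ := htrue e x hex
    have hp' := hp.of_beyond he hex
    obtain ⟨q, hq⟩ := exists_gate_of_mem hp'.1
    exact ⟨q, hp'.comp hq⟩
  · exact (htrue o x hx).imp fun p hp => hp.mono (by omega)

variable (S) in
theorem exists_projectsToPoints_and_hasGates : ∃ κ, S.ProjectsToPoints κ ∧ S.HasGates κ := by
  obtain ⟨κ, hκ⟩ := exists_projectsToPoints (S := S)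
  refine ⟨κ + 5, fun o e he heC => ?_, hκ.hasGates⟩
  exact (hκ o e he heC).imp fun p hp x hx => (hp x hx).mono (by omega)

/-! ### Hyperbolicity -/

variable (S) in
/-- Up to an error `κ`, a shortest path from `x` to `y` may be taken through `p` and `q`. -/
def Passes (κ : ℕ) (x p q y : G) : Prop := S.d x p + S.d p q + S.d q y ≤ S.d x y + κ

theorem Passes.symm {κ : ℕ} {x p q y : G} (h : S.Passes κ x p q y) : S.Passes κ y q p x := by
  unfold Passes at *
  rw [d_comm y q, d_comm q p, d_comm p x, d_comm y x]
  omega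

theorem Passes.mono {κ κ' : ℕ} {x p q y : G} (h : S.Passes κ x p q y) (hκ : κ ≤ κ') :
    S.Passes κ' x p q y :=
  le_trans h (by omega)

theorem passes_of_sameCoset {K : Subgroup G} {κ : ℕ} {o x p q y : G} (hx : SameCoset K o x)
    (hp : S.IsGate K κ o x p) (hq : S.IsGate K κ o y q) : S.Passes (3 * κ) x p q y := by
  have hpx := hp.2 x hx
  have hqx := hq.2 x hx
  have hpq := d_triangle (S := S) p x q
  rw [d_self] at hpx
  rw [d_comm q x, d_comm y x, d_comm y q] at hqx
  rw [d_comm p x] at *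
  unfold Passes
  omega

theorem passes_of_not_sameCoset {i : Bool} {κ : ℕ} {e e' x p q y : G}
    (he : SameCoset (S.V i) e e') (heC : ¬ SameCoset S.C e e') (hx : S.Beyond (!i) e x)
    (hy : S.Beyond (!i) e' y) (hp : S.IsGate S.C κ e x p) (hq : S.IsGate S.C κ e' y q) :
    S.Passes (3 * κ) x p q y := by
  have hey : S.Beyond i e y := Or.inr (hy.startsIn_of_sameCoset he heC)
  obtain ⟨r, hr, hd⟩ := hx.exists_d_add_eq (by simpa using hey)
  have hpr := hp.2 r hr
  have hqr := (hq.of_beyond he hy).2 r (sameCoset_V_of_C hr)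
  have hpq := d_triangle (S := S) p r q
  rw [d_comm q r, d_comm y q, d_comm y r] at hqr
  unfold Passes
  omega

variable (S) in
/-- The alternative for projections `p` of `x` and `q` of `y` in a tree-like space: they are close
to each other, or a shortest path from `x` to `y` passes near both. -/
def NearOrPasses (K : ℕ) (x p q y : G) : Prop := S.d p q ≤ K ∨ S.Passes K x p q y

theorem NearOrPasses.mono {K K' : ℕ} {x p q y : G} (h : S.NearOrPasses K x p q y) (hK : K ≤ K') :
    S.NearOrPasses K' x p q y :=
  h.imp hK.trans' fun h => h.mono hK

theorem NearOrPasses.project {i : Bool} {κ K : ℕ} {o z ζ p w ω q : G}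
    (h : S.NearOrPasses K z ζ ω w) (hζ : S.IsGate (S.V i) κ o z ζ)
    (hω : S.IsGate (S.V i) κ o w ω) (hp : S.IsGate S.C κ o z p) (hq : S.IsGate S.C κ o w q) :
    S.NearOrPasses (K + 8 * κ + 100) z p q w := by
  obtain ⟨p', hp'⟩ := exists_gate_of_mem hζ.1
  obtain ⟨q', hq'⟩ := exists_gate_of_mem hω.1
  have hpp' := (hζ.comp hp').d_le (hp.mono (by omega))
  have hqq' := (hω.comp hq').d_le (hq.mono (by omega))
  have hpq := gate_dichotomy hζ.1 hω.1 hp' hq'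
  have hpp'q := d_triangle (S := S) p p' q
  have hp'q'q := d_triangle (S := S) p' q' q
  have hzζp' := d_triangle (S := S) z ζ p'
  have hzp'p := d_triangle (S := S) z p' p
  have hqq'w := d_triangle (S := S) q q' w
  have hq'ωw := d_triangle (S := S) q' ω w
  rw [d_comm p' p] at *
  rw [d_comm q' q] at *
  unfold NearOrPasses Passes at *
  omega

variable (S) in
/-- The alternative for projections to `⟨c⟩` holds for pairs of points on the same side `j`. -/
def SideDichotomy (κ : ℕ) (j : Bool) (K : ℕ) : Prop :=
  ∀ o z w p q, S.Beyond j o z → S.Beyond j o w → S.IsGate S.C κ o z p → S.IsGate S.C κ o w q →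
    S.NearOrPasses K z p q w

variable (S) in
/-- The alternative for projections to `⟨c⟩` holds for pairs of points on the same side `j` that
moreover lie beyond a common adjacent coset. -/
def AdjacentDichotomy (κ : ℕ) (j : Bool) (K : ℕ) : Prop :=
  ∀ o e z w p q, SameCoset (S.V j) o e → ¬ SameCoset S.C o e →
    S.Beyond (!j) e z → S.Beyond (!j) e w →
    S.IsGate S.C κ o z p → S.IsGate S.C κ o w q → S.NearOrPasses K z p q w

theorem AdjacentDichotomy.sideDichotomy {κ : ℕ} (hκ : S.HasGates κ) {j : Bool} {K : ℕ}
    (h : S.AdjacentDichotomy κ j K) : S.SideDichotomy κ j (K + 11 * κ + 100) := by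
  intro o z w p q hz hw hp hq
  rcases hz with hz | hz
  · exact Or.inr ((passes_of_sameCoset hz hp hq).mono (by omega))
  rcases hw with hw | _
  · exact Or.inr ((passes_of_sameCoset hw hq hp).symm.mono (by omega))
  obtain ⟨e, he, hez⟩ := exists_adjacent (S := S) j o z
  obtain ⟨e', he', hew⟩ := exists_adjacent (S := S) j o w
  by_cases hee : SameCoset S.C e e'
  · have heC : ¬ SameCoset S.C o e := fun heC =>
      (hez.change_base heC).not_startsIn (by simpa using hz)
    exact (h o e z w p q he heC hez (hew.change_base hee) hp hq).mono (by omega)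
  · obtain ⟨ζ, hζ⟩ := hκ _ _ _ hez
    obtain ⟨ω, hω⟩ := hκ _ _ _ hew
    have hpass := passes_of_not_sameCoset (he.symm.trans he') hee hez hew hζ hω
    exact (NearOrPasses.project (.inr hpass) (hζ.of_beyond he hez) (hω.of_beyond he' hew)
      hp hq).mono (by omega)

theorem exists_sideDichotomy {κ : ℕ} (hproj : S.ProjectsToPoints κ) (hκ : S.HasGates κ) :
    ∃ K, ∀ j, S.SideDichotomy κ j K := by
  have htrue : S.AdjacentDichotomy κ true (2 * κ) := by
    intro o e z w p q he heC hz hw hp hq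
    obtain ⟨r, hr⟩ := hproj o e he heC
    have hpr := hp.d_le (hr z hz)
    have hrq := (hr w hw).d_le hq
    have hpq := d_triangle (S := S) p r q
    exact Or.inl (by omega)
  have hfalse : S.AdjacentDichotomy κ false (2 * κ + 11 * κ + 100 + 8 * κ + 100) := by
    intro o e z w p q he _ hz hw hp hq
    obtain ⟨ζ, hζ⟩ := hκ _ _ _ hz
    obtain ⟨ω, hω⟩ := hκ _ _ _ hw
    exact (htrue.sideDichotomy hκ e z w ζ ω hz hw hζ hω).project (hζ.of_beyond he hz)
      (hω.of_beyond he hw) hp hq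
  refine ⟨2 * κ + 11 * κ + 100 + 8 * κ + 100 + 11 * κ + 100, ?_⟩
  rintro (_ | _) o z w p q hz hw hp hq
  · exact hfalse.sideDichotomy hκ o z w p q hz hw hp hq
  · exact (htrue.sideDichotomy hκ o z w p q hz hw hp hq).mono (by omega)

variable (S) in
/-- `x` and `y` do not lie strictly beyond the same coset of `⟨c⟩` in `o V i`. In the Bass–Serre
tree, the vertex `o V i` lies on the path from `x` to `y`. -/
def Separated (i : Bool) (o x y : G) : Prop :=
  ∀ e, SameCoset (S.V i) o e → StartsIn S.V (!i) (e⁻¹ * x) → ¬ StartsIn S.V (!i) (e⁻¹ * y)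

theorem Separated.symm {i : Bool} {o x y : G} (h : S.Separated i o x y) : S.Separated i o y x :=
  fun e he hx hy => h e he hy hx

theorem separated_of_sameCoset {i : Bool} {o x : G} (y : G) (hx : SameCoset (S.V i) o x) :
    S.Separated i o x y :=
  fun _ he hex => absurd hex (beyond_of_sameCoset (he.symm.trans hx)).not_startsIn

theorem Beyond.sameCoset_of_startsIn {i : Bool} {o e x : G} (hx : S.Beyond (!i) o x)
    (he : SameCoset (S.V i) o e) (hex : StartsIn S.V (!i) (e⁻¹ * x)) : SameCoset S.C o e := by
  by_contra h
  exact (hx.startsIn_of_sameCoset he.symm fun h' => h h'.symm).not_startsIn hex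

theorem separated_of_beyond {i : Bool} {o x y : G} (hx : S.Beyond (!i) o x) (hy : S.Beyond i o y) :
    S.Separated i o x y := by
  intro e he hex hey
  have heC := hx.sameCoset_of_startsIn he hex
  exact (hy.change_base heC.symm).not_startsIn hey

theorem Separated.or {i : Bool} {o x y : G} (h : S.Separated i o x y) (w : G) :
    S.Separated i o x w ∨ S.Separated i o y w := by
  by_contra! hcon
  simp only [Separated, not_forall, not_not] at hcon
  obtain ⟨⟨e, he, hex, hew⟩, e', he', hey, hew'⟩ := hcon
  have hee : SameCoset S.C e e' :=
    Beyond.sameCoset_of_startsIn (Or.inr hew) (he.symm.trans he') hew'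
  refine h e he hex ?_
  simpa [mul_assoc] using hey.mul_left hee

variable (S) in
/-- Some coset of a factor separates each two of the three points. -/
def HasMedian (x y z : G) : Prop :=
  ∃ i o, S.Separated i o x y ∧ S.Separated i o y z ∧ S.Separated i o x z

theorem hasMedian_of_startsIn {j : Bool} {e x y z : G} (hx : S.Beyond (!j) e x)
    (hy : StartsIn S.V j (e⁻¹ * y)) (hz : StartsIn S.V j (e⁻¹ * z)) : S.HasMedian x y z := by
  obtain ⟨g, rfl⟩ : ∃ g, y = e * g := ⟨_, (mul_inv_cancel_left e y).symm⟩
  rw [inv_mul_cancel_left] at hy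
  induction hy generalizing e with
  | @single j b hb _ =>
    have heb : SameCoset (S.V j) e (e * b) := .mul_right hb
    exact ⟨j, e, separated_of_beyond hx (beyond_of_sameCoset heb), separated_of_sameCoset z heb,
      separated_of_beyond hx (Or.inr hz)⟩
  | @cons j b g hb hb' hg ih =>
    have hey : S.Beyond j e (e * (b * g)) := Or.inr (by simpa using StartsIn.cons hb hb' hg)
    by_cases hyz : S.Separated j e (e * (b * g)) z
    · exact ⟨j, e, separated_of_beyond hx hey, hyz, separated_of_beyond hx (Or.inr hz)⟩
    · simp only [Separated, not_forall, not_not] at hyz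
      obtain ⟨e', he', hy', hz'⟩ := hyz
      have hebV : SameCoset (S.V j) e (e * b) := .mul_right hb
      have heb : SameCoset S.C (e * b) e' :=
        Beyond.sameCoset_of_startsIn (Or.inr (by simpa [mul_assoc] using hg))
          (hebV.symm.trans he') hy'
      have hxb : StartsIn S.V j ((e * b)⁻¹ * x) :=
        hx.startsIn_of_sameCoset hebV.symm fun h =>
          hb' (C_le_V _ (by simpa [SameCoset] using inv_mem h))
      rw [← mul_assoc]
      exact ih (e := e * b) (Or.inr (by simpa using hxb))
        (by simpa [mul_assoc] using hz'.mul_left heb)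

theorem hasMedian (x y z : G) : S.HasMedian x y z := by
  have hself : ∀ j w, S.Separated j x x w := fun j w => separated_of_sameCoset w (.refl x)
  obtain ⟨j, hy | hy⟩ := exists_beyond (S := S) x y
  · obtain ⟨k, hz⟩ := exists_beyond (S := S) x z
    exact ⟨k, x, hself k y, separated_of_beyond (Or.inl hy) hz, hself k z⟩
  · rcases beyond_or_beyond_not (S := S) j x z with (hz | hz) | hz
    · exact ⟨j, x, hself j y, (separated_of_beyond (Or.inl hz) (Or.inr hy)).symm, hself j z⟩
    · exact hasMedian_of_startsIn (.refl _ x) hy hz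
    · exact ⟨j, x, hself j y, (separated_of_beyond hz (Or.inr hy)).symm, hself j z⟩

theorem passes_of_separated {i : Bool} {κ : ℕ} {o e e' x p q y : G} (h : S.Separated i o x y)
    (he : SameCoset (S.V i) o e) (he' : SameCoset (S.V i) o e') (hx : S.Beyond (!i) e x)
    (hy : S.Beyond (!i) e' y) (hp : S.IsGate S.C κ e x p) (hq : S.IsGate S.C κ e' y q) :
    S.Passes (3 * κ) x p q y := by
  by_cases hee : SameCoset S.C e e'
  · have hq' := hq.change_base hee
    rcases hx with hx | hx
    · exact passes_of_sameCoset hx hp hq'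
    rcases hy.change_base hee with hy | hy
    · exact (passes_of_sameCoset hy hq' hp).symm
    · exact absurd hy (h e he hx)
  · exact passes_of_not_sameCoset (he.symm.trans he') hee hx hy hp hq

theorem fourPoint_of_passes {i : Bool} {K : ℕ} {o x y z w x' y' z' w' : G}
    (hx : SameCoset (S.V i) o x') (hy : SameCoset (S.V i) o y') (hz : SameCoset (S.V i) o z')
    (hw : SameCoset (S.V i) o w') (hxy : S.Passes K x x' y' y) (hxz : S.Passes K x x' z' z)
    (hxw : S.Passes K x x' w' w) (hyz : S.Passes K y y' z' z) (hyw : S.Passes K y y' w' w)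
    (hzw : S.NearOrPasses K z z' w' w) :
    FourPoint S.d (6 * K + 2) x y z w ∧ FourPoint S.d (6 * K + 2) x z y w ∧
      FourPoint S.d (6 * K + 2) y x z w := by
  have d_le (a b a' b' : G) : S.d a b ≤ S.d a a' + S.d a' b' + S.d b' b :=
    (d_triangle a b' b).trans (Nat.add_le_add_right (d_triangle a a' b') _)
  have dxy := d_le x y x' y'
  have dxz := d_le x z x' z'
  have dxw := d_le x w x' w'
  have dyz := d_le y z y' z'
  have dyw := d_le y w y' w'
  have dzw := d_le z w z' w'
  have txzw := d_triangle (S := S) x' z' w'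
  have txwz := d_triangle (S := S) x' w' z'
  have tyzw := d_triangle (S := S) y' z' w'
  have tywz := d_triangle (S := S) y' w' z'
  have fxz := fourPoint_of_sameCoset hx hy hz hw
  have fxy := fourPoint_of_sameCoset hx hz hy hw
  have fyz := fourPoint_of_sameCoset hy hx hz hw
  have cy := d_comm (S := S) y y'
  have cz := d_comm (S := S) z z'
  have czw := d_comm (S := S) z' w'
  have cyz := d_comm (S := S) y' z'
  have cyz' := d_comm (S := S) y z
  have cxy := d_comm (S := S) x' y'
  have cxy' := d_comm (S := S) x y
  simp only [Passes, NearOrPasses, fourPoint_iff] at *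
  refine ⟨?_, ?_, ?_⟩
  · omega
  · omega
  · omega

variable (S) in
theorem exists_fourPoint : ∃ K, ∀ x y z w : G, FourPoint S.d K x y z w := by
  obtain ⟨κ, hproj, hκ⟩ := S.exists_projectsToPoints_and_hasGates
  obtain ⟨K, hK⟩ := exists_sideDichotomy hproj hκ
  refine ⟨6 * (K + 3 * κ) + 2, fun x y z w => ?_⟩
  obtain ⟨i, o, hxy, hyz, hxz⟩ := hasMedian (S := S) x y z
  choose e he hbe using exists_adjacent (S := S) i o
  choose g hg using fun a => hκ _ _ _ (hbe a)
  have hgV : ∀ a, SameCoset (S.V i) o (g a) := fun a => ((hg a).of_beyond (he a) (hbe a)).1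
  have hpass : ∀ a b, S.Separated i o a b → S.Passes (K + 3 * κ) a (g a) (g b) b := fun a b h =>
    (passes_of_separated h (he a) (he b) (hbe a) (hbe b) (hg a) (hg b)).mono (by omega)
  have hdich : ∀ a b, S.NearOrPasses (K + 3 * κ) a (g a) (g b) b := by
    intro a b
    by_cases hee : SameCoset S.C (e a) (e b)
    · exact (hK _ _ _ _ _ _ (hbe a) ((hbe b).change_base hee) (hg a)
        ((hg b).change_base hee)).mono (by omega)
    · exact Or.inr ((passes_of_not_sameCoset ((he a).symm.trans (he b)) hee (hbe a) (hbe b)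
        (hg a) (hg b)).mono (by omega))
  have key : ∀ a b c, S.Separated i o a b → S.Separated i o b c → S.Separated i o a c →
      S.Separated i o a w → S.Separated i o b w → _ := fun a b c hab hbc hac haw hbw =>
    fourPoint_of_passes (hgV a) (hgV b) (hgV c) (hgV w) (hpass _ _ hab) (hpass _ _ hac)
      (hpass _ _ haw) (hpass _ _ hbc) (hpass _ _ hbw) (hdich c w)
  rcases hxy.or w with hxw | hyw
  · rcases hyz.or w with hyw | hzw
    · exact (key x y z hxy hyz hxz hxw hyw).1
    · exact (key x z y hxz hyz.symm hxy hxw hzw).2.1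
  · rcases hxz.or w with hxw | hzw
    · exact (key x y z hxy hyz hxz hxw hyw).1
    · have := (key y z x hyz hxz.symm hxy.symm hyw hzw).2.2
      simpa only [FourPoint, d_comm z x, d_comm z y, d_comm y x, max_comm] using this

theorem isWordHyperbolic (S : CyclicAmalgam G) : IsWordHyperbolic G := by
  obtain ⟨K, hK⟩ := S.exists_fourPoint
  exact isSymmGen_gens.isWordHyperbolic_of_fourPoint hK

/-! ### Property (Q) -/

variable {H : Subgroup G}

variable (S H) in
/-- `z` lies in the `r`-neighbourhood of the subgroup `H`. -/
def Near (r : ℕ) (z : G) : Prop := ∃ h ∈ H, S.d z h ≤ r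

theorem near_of_mem {r : ℕ} {z : G} (hz : z ∈ H) : S.Near H r z :=
  ⟨z, hz, (d_self z).trans_le r.zero_le⟩

theorem Near.mono {r r' : ℕ} {z : G} (h : S.Near H r z) (hr : r ≤ r') : S.Near H r' z :=
  h.imp fun _ h => ⟨h.1, h.2.trans hr⟩

theorem Near.of_d_le {r s : ℕ} {z z' : G} (h : S.Near H r z) (hd : S.d z z' ≤ s) :
    S.Near H (r + s) z' := by
  obtain ⟨h, hh, hz⟩ := h
  refine ⟨h, hh, (d_triangle z' z h).trans ?_⟩
  rw [d_comm z' z]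
  omega

theorem Near.mul_left {r : ℕ} {z g : G} (h : S.Near H r z) (hg : g ∈ H) :
    S.Near H r (g * z) := by
  obtain ⟨h, hh, hz⟩ := h
  exact ⟨g * h, H.mul_mem hg hh, by rwa [d_mul_left]⟩

theorem Near.exists_eq_mul {r : ℕ} {z : G} (h : S.Near H r z) :
    ∃ h ∈ H, ∃ b, S.d 1 b ≤ r ∧ z = h * b := by
  obtain ⟨h, hh, hz⟩ := h
  refine ⟨h, hh, h⁻¹ * z, ?_, (mul_inv_cancel_left h z).symm⟩
  rwa [← d_mul_left h, mul_one, mul_inv_cancel_left, d_comm]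

variable (S H) in
/-- A step of length at most `R` between points of a coset of `V i` near `H`. -/
def NearStep (R : ℕ) (i : Bool) (a b : G) : Prop :=
  S.Near H R a ∧ S.Near H R b ∧ SameCoset (S.V i) a b ∧ S.d a b ≤ R

theorem NearStep.symm {R : ℕ} {i : Bool} {a b : G} (h : S.NearStep H R i a b) :
    S.NearStep H R i b a :=
  ⟨h.2.1, h.1, h.2.2.1.symm, d_comm (S := S) a b ▸ h.2.2.2⟩

variable (S H) in
/-- `p` and `q` are joined by a chain of bounded steps near `H`, each in a coset of a factor. -/
def NearPath (R : ℕ) : G → G → Prop :=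
  Relation.ReflTransGen fun a b => ∃ i, S.NearStep H R i a b

variable (S H) in
/-- `p` and `q` are joined by a chain of bounded steps near `H` inside a coset of `V i`. -/
def NearChain (R : ℕ) (i : Bool) : G → G → Prop :=
  Relation.ReflTransGen (S.NearStep H R i)

theorem NearPath.refl (R : ℕ) (p : G) : S.NearPath H R p p := Relation.ReflTransGen.refl

theorem NearPath.symm {R : ℕ} {p q : G} (h : S.NearPath H R p q) : S.NearPath H R q p :=
  have : Std.Symm fun a b => ∃ i, S.NearStep H R i a b := ⟨fun _ _ ⟨i, h⟩ => ⟨i, h.symm⟩⟩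
  Relation.ReflTransGen.stdSymm.symm _ _ h

theorem NearPath.mono {R R' : ℕ} {p q : G} (h : S.NearPath H R p q) (hR : R ≤ R') :
    S.NearPath H R' p q :=
  Relation.ReflTransGen.mono (fun _ _ ⟨i, ha, hb, hab, hd⟩ =>
    ⟨i, ha.mono hR, hb.mono hR, hab, hd.trans hR⟩) _ _ h

theorem NearChain.sameCoset {R : ℕ} {i : Bool} {p q : G} (h : S.NearChain H R i p q) :
    SameCoset (S.V i) p q := by
  induction h with
  | refl => exact .refl p
  | tail _ hbc ih => exact ih.trans hbc.2.2.1

theorem nearPath_of_d_le {r s : ℕ} {p q : G} (hp : S.Near H r p) (hd : S.d p q ≤ s) :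
    S.NearPath H (r + s + 1) p q := by
  obtain ⟨g, rfl⟩ : ∃ g, q = p * g := ⟨p⁻¹ * q, (mul_inv_cancel_left p q).symm⟩
  obtain ⟨l, ⟨hl, hlen⟩, rfl⟩ :=
    exists_isGeodesicWord (isSymmGen_gens (S := S)).2.1 (isSymmGen_gens.mem_closure g)
  have hls : l.length ≤ s := by simpa [hlen, d, wordDist] using hd
  clear hd hlen
  have near_prefix {m : List G} (hm : IsWordOver S.gens m) (hms : m.length ≤ s) :
      S.Near H (r + s + 1) (p * m.prod) := by
    refine (hp.of_d_le (s := s) ?_).mono (Nat.le_succ _)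
    simpa [d, wordDist] using hm.wordLength_prod_le.trans hms
  induction l using List.reverseRecOn with
  | nil => simpa using .refl _ p
  | append_singleton l y ih =>
    have hll : IsWordOver S.gens l := fun z hz => hl z (by simp [hz])
    have hy : y ∈ S.gens := hl y (by simp)
    obtain ⟨j, hj⟩ := mem_gens.1 hy
    have hls' : l.length ≤ s := by simp at hls; omega
    have hstep : S.NearStep H (r + s + 1) j (p * l.prod) (p * (l ++ [y]).prod) := by
      refine ⟨near_prefix hll hls', near_prefix hl hls, ?_, ?_⟩
      · simpa [SameCoset, mul_assoc] using X_subset_V j hj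
      · simpa [d, wordDist, mul_assoc] using (wordLength_le_one hy).trans (by omega)
    exact (ih hll hls').tail ⟨j, hstep⟩

variable (S) in
theorem exists_forall_nearPath (hH : H.FG) (r : ℕ) :
    ∃ R, r ≤ R ∧ ∀ p q, S.Near H r p → S.Near H r q → S.NearPath H R p q := by
  obtain ⟨T, rfl⟩ := hH
  obtain ⟨D, hD⟩ := (T.finite_toSet.image (S.d 1)).bddAbove
  have hpath : ∀ g ∈ Subgroup.closure (T : Set G), ∀ k ∈ Subgroup.closure (T : Set G),
      S.NearPath (Subgroup.closure (T : Set G)) (D + 1) k (k * g) := by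
    intro g hg
    induction hg using Subgroup.closure_induction with
    | mem t ht =>
      intro k hk
      have hd : S.d k (k * t) ≤ D := by
        simpa only [d_mul_left, mul_one] using
          (d_mul_left (S := S) k 1 t).trans_le (hD (Set.mem_image_of_mem _ ht))
      simpa using nearPath_of_d_le (near_of_mem (r := 0) hk) hd
    | one => exact fun k _ => by simpa using .refl _ k
    | mul g g' hg _ ihg ihg' =>
      intro k hk
      rw [← mul_assoc]
      exact (ihg k hk).trans (ihg' _ (mul_mem hk hg))
    | inv g hg ih =>
      intro k hk
      simpa using (ih (k * g⁻¹) (mul_mem hk (inv_mem hg))).symm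
  refine ⟨r + r + 1 + (D + 1), by omega, fun p q hp hq => ?_⟩
  have to_subgroup : ∀ {z}, S.Near (Subgroup.closure (T : Set G)) r z →
      ∃ k ∈ Subgroup.closure (T : Set G),
        S.NearPath (Subgroup.closure (T : Set G)) (r + r + 1 + (D + 1)) z k := fun hz => by
    obtain ⟨k, hk, hd⟩ := id hz
    exact ⟨k, hk, (nearPath_of_d_le hz hd).mono (by omega)⟩
  obtain ⟨k, hk, hpk⟩ := to_subgroup hp
  obtain ⟨k', hk', hqk⟩ := to_subgroup hq
  have hkk : S.NearPath (Subgroup.closure (T : Set G)) (D + 1) k k' := by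
    simpa using hpath (k⁻¹ * k') (mul_mem (inv_mem hk) hk') k hk
  exact (hpk.trans (hkk.mono (by omega))).trans hqk.symm

theorem NearPath.exists_near_sameCoset {r : ℕ} {j : Bool} {e p q : G} (h : S.NearPath H r p q)
    (hq : S.Near H r q) (hp : S.Beyond (!j) e p) (hqe : S.Beyond j e q) :
    ∃ a, SameCoset S.C e a ∧ S.Near H r a := by
  induction h using Relation.ReflTransGen.head_induction_on with
  | refl => exact ⟨q, hqe.sameCoset hp, hq⟩
  | head hab _ ih =>
    obtain ⟨k, ha, -, hab, -⟩ := hab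
    exact hp.elim (fun hC => ⟨_, hC, ha⟩) fun hV => ih (hV.beyond hab)

variable (S H) in
/-- The stabiliser in `H` of the coset `g⟨c⟩` is infinite. -/
def IsPeriodic (g : G) : Prop := ∃ m : ℤ, m ≠ 0 ∧ g * S.c ^ m * g⁻¹ ∈ H

theorem isPeriodic_mul_left_iff {g h : G} (hh : h ∈ H) :
    S.IsPeriodic H (h * g) ↔ S.IsPeriodic H g := by
  have hconj : ∀ m : ℤ, h * g * S.c ^ m * (h * g)⁻¹ ∈ H ↔ g * S.c ^ m * g⁻¹ ∈ H := fun m => by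
    have : h * g * S.c ^ m * (h * g)⁻¹ = h * (g * S.c ^ m * g⁻¹) * h⁻¹ := by group
    rw [this, H.mul_mem_cancel_right (inv_mem hh), H.mul_mem_cancel_left hh]
  simp only [IsPeriodic, hconj]

variable (S H) in
theorem exists_forall_near_of_isPeriodic (r : ℕ) : ∃ R, ∀ p z : G, S.IsPeriodic H p →
    S.Near H r p → SameCoset S.C p z → S.Near H R z := by
  have hperiod : ∀ b : G, ∃ m : ℤ, S.IsPeriodic H b → m ≠ 0 ∧ b * S.c ^ m * b⁻¹ ∈ H := fun b => by
    by_cases hb : S.IsPeriodic H b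
    · exact hb.imp fun m hm _ => hm
    · exact ⟨0, fun h => absurd h hb⟩
  choose period hperiod using hperiod
  obtain ⟨M, hM⟩ := ((finite_ball (S := S) 1 r).image fun b => (period b).natAbs).bddAbove
  refine ⟨r + M, fun p z hp hpr hz => ?_⟩
  obtain ⟨n, rfl⟩ := hz.exists_eq_mul_zpow
  obtain ⟨h, hh, b, hb, rfl⟩ := hpr.exists_eq_mul
  obtain ⟨hm, hbH⟩ := hperiod b ((isPeriodic_mul_left_iff hh).1 hp)
  have hmM : (period b).natAbs ≤ M := hM (Set.mem_image_of_mem _ hb)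
  have hdecomp : h * b * S.c ^ n =
      h * (b * S.c ^ period b * b⁻¹) ^ (n / period b) * (b * S.c ^ (n % period b)) := by
    rw [conj_zpow, ← zpow_mul]
    nth_rw 1 [← Int.mul_ediv_add_emod n (period b), zpow_add]
    group
  have hnear : S.Near H (r + M) (b * S.c ^ (n % period b)) := by
    refine Near.of_d_le (z := b) ⟨1, H.one_mem, d_comm (S := S) 1 b ▸ hb⟩ ?_
    rw [d_right_mul_zpow]
    have := Int.emod_nonneg n hm
    have := Int.emod_lt n hm
    omega
  exact hdecomp ▸ hnear.mul_left (mul_mem hh (zpow_mem hbH _))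

variable (S H) in
theorem exists_forall_d_le_of_not_isPeriodic (r : ℕ) : ∃ R, ∀ p q : G, ¬ S.IsPeriodic H p →
    S.Near H r p → S.Near H r q → SameCoset S.C p q → S.d p q ≤ R := by
  have hexp : ∀ b : G × G, ∃ n : ℤ, ∀ n' : ℤ, b.1 * S.c ^ n' * b.2⁻¹ ∈ H →
      b.1 * S.c ^ n * b.2⁻¹ ∈ H := fun b => by
    by_cases hb : ∃ n : ℤ, b.1 * S.c ^ n * b.2⁻¹ ∈ H
    · exact hb.imp fun n hn _ _ => hn
    · exact ⟨0, fun n hn => absurd ⟨n, hn⟩ hb⟩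
  choose exponent hexp using hexp
  have hball := finite_ball (S := S) 1 r
  obtain ⟨M, hM⟩ := ((hball.prod hball).image fun b => (exponent b).natAbs).bddAbove
  refine ⟨M, fun p q hp hpr hqr hq => ?_⟩
  obtain ⟨n, rfl⟩ := hq.exists_eq_mul_zpow
  obtain ⟨h, hh, b, hb, rfl⟩ := hpr.exists_eq_mul
  obtain ⟨h', hh', b', hb', hbb'⟩ := hqr.exists_eq_mul
  have hn : b * S.c ^ n * b'⁻¹ ∈ H := by
    have : b * S.c ^ n * b'⁻¹ = h⁻¹ * h' := by
      rw [mul_inv_eq_iff_eq_mul, mul_assoc, ← hbb']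
      group
    exact this ▸ mul_mem (inv_mem hh) hh'
  have hunique : n = exponent (b, b') := by
    by_contra hne
    refine hp ((isPeriodic_mul_left_iff hh).2 ⟨n - exponent (b, b'), sub_ne_zero.2 hne, ?_⟩)
    have := mul_mem hn (inv_mem (hexp (b, b') n hn))
    simpa [zpow_sub, mul_assoc] using this
  rw [d_right_mul_zpow, hunique]
  exact hM (Set.mem_image_of_mem _ (Set.mk_mem_prod hb hb'))

theorem nearChain_mul_zpow {R : ℕ} {p : G} (hR : 1 ≤ R)
    (h : ∀ z, SameCoset S.C p z → S.Near H R z) (i : Bool) (n : ℤ) :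
    S.NearChain H R i p (p * S.c ^ n) := by
  have hstep (a b : ℤ) (hab : (b - a).natAbs ≤ 1) :
      S.NearStep H R i (p * S.c ^ a) (p * S.c ^ b) :=
    ⟨h _ (sameCoset_mul_zpow p a), h _ (sameCoset_mul_zpow p b),
      sameCoset_V_of_C ((sameCoset_mul_zpow p a).symm.trans (sameCoset_mul_zpow p b)),
      (d_mul_zpow p a b).trans_le (hab.trans hR)⟩
  induction n with
  | zero => rw [zpow_zero, mul_one]; exact .refl
  | succ n ih => exact ih.tail (hstep _ _ (by omega))
  | pred n ih => exact ih.tail (hstep _ _ (by omega))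

variable (S H) in
theorem exists_forall_nearChain_of_sameCoset (r : ℕ) : ∃ R, r ≤ R ∧ ∀ i p q, S.Near H r p →
    S.Near H r q → SameCoset S.C p q → S.NearChain H R i p q := by
  obtain ⟨R₁, hR₁⟩ := exists_forall_near_of_isPeriodic S H r
  obtain ⟨R₂, hR₂⟩ := exists_forall_d_le_of_not_isPeriodic S H r
  refine ⟨r + R₁ + R₂ + 1, by omega, fun i p q hp hq hpq => ?_⟩
  by_cases hper : S.IsPeriodic H p
  · obtain ⟨n, rfl⟩ := hpq.exists_eq_mul_zpow
    exact nearChain_mul_zpow (by omega) (fun z hz => (hR₁ p z hper hp hz).mono (by omega)) i n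
  · exact .single ⟨hp.mono (by omega), hq.mono (by omega), sameCoset_V_of_C hpq,
      (hR₂ p q hper hp hq hpq).trans (by omega)⟩

/- The excursions of the path out of the coset `p (V i)` leave it and come back in a single coset
of `⟨c⟩`, in which they are replaced by a chain. -/
theorem NearPath.nearChain {r R : ℕ} {i : Bool} {p q : G} (h : S.NearPath H r p q) (hrR : r ≤ R)
    (hC : ∀ x y, S.Near H r x → S.Near H r y → SameCoset S.C x y → S.NearChain H R i x y)
    (hp : S.Near H r p) (hq : S.Near H r q) (hpq : SameCoset (S.V i) p q) :
    S.NearChain H R i p q := by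
  obtain ⟨a, ha, hpa, haq⟩ : ∃ a, S.Near H r a ∧ S.NearChain H R i p a ∧ S.Beyond (!i) a q := by
    clear hpq hq
    induction h with
    | refl => exact ⟨p, hp, .refl, .refl _ p⟩
    | @tail x y _ hxy ih =>
      obtain ⟨a, ha, hpa, hax⟩ := ih
      obtain ⟨j, hx, hy, hxyV, hd⟩ := hxy
      rcases hax with hax | hax
      · have hpx := hpa.trans (hC a x ha hx hax)
        obtain rfl | rfl := Bool.eq_or_eq_not j i
        · exact ⟨y, hy, hpx.tail ⟨hx.mono hrR, hy.mono hrR, hxyV, hd.trans hrR⟩, .refl _ y⟩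
        · exact ⟨x, hx, hpx, beyond_of_sameCoset hxyV⟩
      · exact ⟨a, ha, hpa, hax.beyond hxyV⟩
  have haqC : SameCoset S.C a q :=
    haq.sameCoset (by simpa using beyond_of_sameCoset (hpa.sameCoset.symm.trans hpq))
  exact hpa.trans (hC a q ha hq haqC)

/- By the four-point condition with constant `0`, at one of the steps `z` is nearly between the end
points. -/
theorem NearChain.exists_step {R : ℕ} {i : Bool} {p q z : G} {T : ℕ} (h : S.NearChain H R i p q)
    (hz : SameCoset (S.V i) p z)
    (hT : S.treeLength i (p⁻¹ * z) + S.treeLength i (q⁻¹ * z) ≤ S.treeLength i (p⁻¹ * q) + T) :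
    p = q ∨ ∃ a b, S.NearStep H R i a b ∧ SameCoset (S.V i) a z ∧
      S.treeLength i (a⁻¹ * z) + S.treeLength i (b⁻¹ * z) ≤ S.treeLength i (a⁻¹ * b) + T := by
  induction h with
  | refl => exact Or.inl rfl
  | @tail b q hpb hbq ih =>
    right
    have hpbV : SameCoset (S.V i) p b := NearChain.sameCoset hpb
    rcases fourPoint_iff.1 (fourPoint_treeLength_of_sameCoset (.refl p) hpbV
      (hpbV.trans hbq.2.2.1) hz) with h | h
    · rcases ih (by omega) with rfl | h'
      · exact ⟨p, q, hbq, hz, hT⟩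
      · exact h'
    · exact ⟨b, q, hbq, hpbV.symm.trans hz, by omega⟩

theorem NearChain.near_of_between {R : ℕ} {i : Bool} {p q z : G} (h : S.NearChain H R i p q)
    (hp : S.Near H R p) (hz : SameCoset (S.V i) p z) (hd : S.d p z + S.d z q = S.d p q) :
    S.Near H (R + (R + 2)) z := by
  have hpq := h.sameCoset
  have hpz := treeLength_le_d hz
  have hqz := treeLength_le_d (hpq.symm.trans hz)
  have hpq' := d_le_treeLength hpq
  rw [← hd, mul_add] at hpq'
  rw [d_comm q z] at hqz
  rcases h.exists_step (T := S.scale i) hz (by omega) with rfl | ⟨a, b, hab, haz, h⟩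
  · rw [d_self] at hd
    have : p = z := eq_of_d_eq_zero (S := S) (by omega)
    exact this ▸ hp.mono (by omega)
  · refine hab.1.of_d_le (Nat.le_of_mul_le_mul_left (?_ : S.scale i * _ ≤ _) (S.scale_pos i))
    have hab' := (treeLength_le_d hab.2.2.1).trans (Nat.mul_le_mul_left _ hab.2.2.2)
    have haz' := d_le_treeLength haz
    rw [mul_add]
    omega

variable (S) in
theorem exists_forall_near_of_between (hH : H.FG) (r : ℕ) :
    ∃ R, ∀ (i : Bool) (p q z : G), S.Near H r p → S.Near H r q → SameCoset (S.V i) p q →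
      SameCoset (S.V i) p z → S.d p z + S.d z q = S.d p q → S.Near H R z := by
  obtain ⟨r', hrr', hpath⟩ := S.exists_forall_nearPath hH r
  obtain ⟨R, hrR, hR⟩ := exists_forall_nearChain_of_sameCoset S H r'
  refine ⟨R + (R + 2), fun i p q z hp hq hpq hpz hd => ?_⟩
  have hchain : S.NearChain H R i p q :=
    (hpath p q hp hq).nearChain hrR (hR i) (hp.mono hrr') (hq.mono hrr') hpq
  exact hchain.near_of_between (hp.mono (hrr'.trans hrR)) hpz hd

variable (S) in
theorem exists_forall_isGate_of_not_isPeriodic (hH : H.FG) (r : ℕ) :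
    ∃ κ, ∀ (i : Bool) (a a' : G), S.Near H r a → S.Near H r a' → SameCoset (S.V i) a a' →
      ¬ S.IsPeriodic H a → S.IsGate S.C κ a a' a := by
  obtain ⟨R, hR⟩ := S.exists_forall_near_of_between hH r
  obtain ⟨D, hD⟩ := exists_forall_d_le_of_not_isPeriodic S H (r + (R + 4))
  refine ⟨2 * D + 1, fun i a a' ha ha' haa' hper => ⟨.refl a, fun q hq => ?_⟩⟩
  have hqV : SameCoset (S.V i) a q := sameCoset_V_of_C hq
  set t := (S.d a a' + S.d a q - S.d a' q) / 2
  have ta := d_triangle (S := S) a q a'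
  have ta' := d_triangle (S := S) a a' q
  have tq := d_triangle (S := S) a' a q
  have ca := d_comm (S := S) a' a
  have cq := d_comm (S := S) q a'
  obtain ⟨z, hz, haz, hza'⟩ := exists_between haa' (k := t) (by omega)
  obtain ⟨ε, hε⟩ := exists_direction_zpow hq
  obtain ⟨hay, hyq⟩ := hε t (by omega)
  have hy := sameCoset_mul_zpow (S := S) a (ε * t)
  generalize a * S.c ^ (ε * t : ℤ) = y at hay hyq hy
  have hzy : S.d z y ≤ 4 := by
    have hzq := fourPoint_of_sameCoset hz haa' hqV (.refl a)
    have hzy := fourPoint_of_sameCoset hz hqV (sameCoset_V_of_C (i := i) hy) (.refl a)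
    have := d_comm (S := S) z a
    have := d_comm (S := S) q a
    have := d_comm (S := S) q y
    have := d_comm (S := S) y a
    rw [fourPoint_iff] at hzq hzy
    omega
  have hzR := hR i a a' z ha ha' haa' hz (by omega)
  have hyD := hD a y hper (ha.mono (by omega)) ((hzR.of_d_le hzy).mono (by omega)) hy
  omega

variable (S H) in
/-- `a` is a point near `H` that stands in for the point `q` of the same coset of `⟨c⟩`: either
`a = q`, or the coset is not periodic, and its points near `H` are then close to each other. -/
def Anchors (r : ℕ) (a q : G) : Prop :=
  S.Near H r a ∧ SameCoset S.C a q ∧ (q = a ∨ ¬ S.IsPeriodic H a)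

theorem anchors_self {r : ℕ} {a : G} (ha : S.Near H r a) : S.Anchors H r a a :=
  ⟨ha, .refl a, Or.inl rfl⟩

variable (S H) in
theorem exists_forall_anchors (r : ℕ) : ∃ R, ∀ a q, S.Near H r a → SameCoset S.C a q →
    ∃ a', SameCoset S.C a a' ∧ S.Anchors H R a' q := by
  obtain ⟨R, hR⟩ := exists_forall_near_of_isPeriodic S H r
  refine ⟨r + R, fun a q ha haq => ?_⟩
  by_cases hper : S.IsPeriodic H a
  · exact ⟨q, haq, anchors_self ((hR a q hper ha haq).mono (by omega))⟩
  · exact ⟨a, .refl a, ha.mono (by omega), haq, Or.inr hper⟩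

variable (S) in
theorem exists_forall_d_le_of_anchors (hH : H.FG) (r : ℕ) :
    ∃ κ, ∀ (i : Bool) (a a' q q' : G), S.Anchors H r a q → S.Anchors H r a' q' →
      SameCoset (S.V i) a a' → S.d a a' ≤ S.d q q' + κ := by
  obtain ⟨κ, hκ⟩ := S.exists_forall_isGate_of_not_isPeriodic hH r
  have hgate : ∀ (i : Bool) (a a' q : G), S.Anchors H r a q → S.Near H r a' →
      SameCoset (S.V i) a a' → S.d a' a + S.d a q ≤ S.d a' q + κ := by
    rintro i a a' q ⟨ha, hq, rfl | hper⟩ ha' haa'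
    · rw [d_self]; omega
    · exact (hκ i a a' ha ha' haa' hper).2 q hq
  refine ⟨2 * κ + 2, fun i a a' q q' ha ha' haa' => ?_⟩
  have hq := hgate i a a' q ha ha'.1 haa'
  have hq' := hgate i a' a q' ha' ha.1 haa'.symm
  have hfour := fourPoint_of_sameCoset (.refl a) haa'
    (haa'.trans (sameCoset_V_of_C ha'.2.1)) (sameCoset_V_of_C (i := i) ha.2.1)
  have := d_comm (S := S) a' a
  have := d_comm (S := S) q' q
  rw [fourPoint_iff] at hfour
  omega

variable (S H) in
/-- `k'` is obtained from `k` by at most `n` factors in `H` of length at most `R`. -/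
def Reaches (R n : ℕ) (k k' : G) : Prop :=
  ∃ l : List H, l.length ≤ n ∧ IsWordOver {y : H | S.d 1 (y : G) ≤ R} l ∧ k * l.prod = k'

theorem Reaches.trans {R n n' : ℕ} {k k' k'' : G} (h : S.Reaches H R n k k')
    (h' : S.Reaches H R n' k' k'') : S.Reaches H R (n + n') k k'' := by
  obtain ⟨l, hl, hlR, rfl⟩ := h
  obtain ⟨l', hl', hlR', rfl⟩ := h'
  exact ⟨l ++ l', by simp; omega, hlR.append hlR', by simp [mul_assoc]⟩

theorem Reaches.mono {R n n' : ℕ} {k k' : G} (h : S.Reaches H R n k k') (hn : n ≤ n') :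
    S.Reaches H R n' k k' :=
  h.imp fun _ h => ⟨h.1.trans hn, h.2⟩

theorem reaches_one {R : ℕ} {k k' : G} (hk : k ∈ H) (hk' : k' ∈ H) (hd : S.d k k' ≤ R) :
    S.Reaches H R 1 k k' := by
  refine ⟨[⟨k⁻¹ * k', mul_mem (inv_mem hk) hk'⟩], by simp, fun y hy => ?_, by simp⟩
  obtain rfl := List.mem_singleton.1 hy
  rwa [Set.mem_ofPred_eq, ← d_mul_left k, mul_one, mul_inv_cancel_left]

theorem reaches_of_between {R : ℕ} {i : Bool} {a a' k k' : G} (hk : k ∈ H) (hak : S.d a k ≤ R)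
    (hk' : k' ∈ H) (hak' : S.d a' k' ≤ R) (haa' : SameCoset (S.V i) a a')
    (hz : ∀ z, SameCoset (S.V i) a z → S.d a z + S.d z a' = S.d a a' → S.Near H R z) :
    S.Reaches H (2 * R + 1) (S.d a a' + 1) k k' := by
  induction hn : S.d a a' generalizing a' k' with
  | zero =>
    obtain rfl := eq_of_d_eq_zero hn
    have := d_triangle (S := S) k a k'
    have := d_comm (S := S) k a
    exact reaches_one hk hk' (by omega)
  | succ n ih =>
    obtain ⟨z, hzV, haz, hza'⟩ := exists_between haa' (k := n) (by omega)
    obtain ⟨m, hm, hzm⟩ := hz z hzV (by omega)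
    have hkm : S.Reaches H (2 * R + 1) (n + 1) k m := by
      refine ih hm hzm hzV (fun y hy hyd => hz y hy ?_) haz
      have := d_triangle (S := S) y z a'
      have := d_triangle (S := S) a y a'
      omega
    have := d_triangle (S := S) m z k'
    have := d_triangle (S := S) z a' k'
    have := d_comm (S := S) m z
    exact hkm.trans (reaches_one hm hk' (by omega))

variable (S) in
theorem exists_forall_reaches_of_anchors (hH : H.FG) (r : ℕ) :
    ∃ R κ, ∀ (i : Bool) (a a' q q' k k' : G), S.Anchors H r a q → S.Anchors H r a' q' →
      SameCoset (S.V i) a a' → k ∈ H → S.d a k ≤ r → k' ∈ H → S.d a' k' ≤ r →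
      S.Reaches H R (S.d q q' + κ) k k' := by
  obtain ⟨R, hR⟩ := S.exists_forall_near_of_between hH r
  obtain ⟨κ, hκ⟩ := S.exists_forall_d_le_of_anchors hH r
  refine ⟨2 * (R + r) + 1, κ + 1, ?_⟩
  intro i a a' q q' k k' ha ha' haa' hk hak hk' hak'
  have hreach := reaches_of_between (R := R + r) hk (hak.trans (by omega)) hk'
    (hak'.trans (by omega)) haa'
    fun z hz hd => (hR i a a' z ha.1 ha'.1 haa' hz hd).mono (by omega)
  have := hκ i a a' q q' ha ha' haa'
  exact hreach.mono (by omega)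

variable (S) in
theorem exists_forall_next_anchor (hH : H.FG) : ∃ r, ∀ h ∈ H, ∀ j q, S.Beyond (!j) q 1 →
    S.Beyond j q h → (∃ q' a', S.Anchors H r a' q' ∧ SameCoset (S.V j) q q' ∧ q ≠ q' ∧
      S.d q h = S.d q q' + S.d q' h ∧ S.Beyond j q' 1 ∧ S.Beyond (!j) q' h) ∨
      SameCoset (S.V j) q h := by
  obtain ⟨r₀, -, hpath⟩ := S.exists_forall_nearPath hH 0
  obtain ⟨r, hr⟩ := exists_forall_anchors S H r₀
  refine ⟨r, fun h hh j q hq1 hqh => ?_⟩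
  obtain ⟨e, hqe, heh⟩ := exists_adjacent (S := S) j q h
  by_cases hqeC : SameCoset S.C q e
  · exact Or.inr (sameCoset_V_of_C (hqh.sameCoset (heh.change_base hqeC)))
  left
  have he1 : S.Beyond j e 1 :=
    Or.inr (hq1.startsIn_of_sameCoset hqe.symm fun h => hqeC h.symm)
  obtain ⟨q', heq', hd⟩ := Beyond.exists_d_add_eq (S := S) (x := q) (i := j)
    (beyond_of_sameCoset hqe.symm) heh
  obtain ⟨a, hea, ha⟩ := (hpath 1 h (near_of_mem H.one_mem) (near_of_mem hh)).exists_near_sameCoset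
    (near_of_mem hh) (e := e) (j := !j) (by simpa using he1) heh
  obtain ⟨a', -, ha'⟩ := hr a q' ha (hea.symm.trans heq')
  refine ⟨q', a', ha', hqe.trans (sameCoset_V_of_C heq'), ?_, hd, he1.change_base heq'.symm,
    heh.change_base heq'.symm⟩
  rintro rfl
  exact hqeC heq'.symm

variable (S) in
theorem exists_reaches (hH : H.FG) :
    ∃ R K, ∀ h ∈ H, S.Reaches H R (K * S.d 1 h + K) 1 h := by
  obtain ⟨r, hnext⟩ := S.exists_forall_next_anchor hH
  obtain ⟨R, κ, hseg⟩ := S.exists_forall_reaches_of_anchors hH r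
  refine ⟨R, κ + 1, fun h hh => ?_⟩
  suffices main : ∀ n j q a k, S.d q h = n → S.Beyond (!j) q 1 → S.Beyond j q h →
      S.Anchors H r a q → k ∈ H → S.d a k ≤ r → S.Reaches H R ((κ + 1) * n + (κ + 1)) k h by
    obtain ⟨j, hj⟩ := exists_beyond (S := S) 1 h
    exact main _ j 1 1 1 rfl (.refl _ 1) hj (anchors_self (near_of_mem H.one_mem)) H.one_mem
      (by simp [d_self])
  intro n
  induction n using Nat.strong_induction_on with
  | h n ih =>
    rintro j q a k rfl hq1 hqh ha hk hak
    have haqV : SameCoset (S.V j) a q := sameCoset_V_of_C ha.2.1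
    rcases hnext h hh j q hq1 hqh with ⟨q', a', ha', hqq', hne, hd, hq1', hqh'⟩ | hqhV
    · obtain ⟨k', hk', hak'⟩ := ha'.1
      have hpos : S.d q q' ≠ 0 := fun h => hne (eq_of_d_eq_zero h)
      have hkk' := hseg j a a' q q' k k' ha ha'
        ((haqV.trans hqq').trans (sameCoset_V_of_C ha'.2.1).symm) hk hak hk' hak'
      have hk'h := ih (S.d q' h) (by omega) (!j) q' a' k' rfl (by simpa using hq1') hqh' ha' hk'
        hak'
      refine (hkk'.trans hk'h).mono ?_
      rw [hd]
      nlinarith [Nat.pos_of_ne_zero hpos]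
    · refine (hseg j a h q h k h ha (anchors_self (near_of_mem hh)) (haqV.trans hqhV) hk hak hh
        (by simp [d_self])).mono ?_
      nlinarith

theorem hasPropertyQ (S : CyclicAmalgam G) : HasPropertyQ G := by
  intro H hH
  obtain ⟨R, K, hR⟩ := S.exists_reaches hH
  set Y : Set H := {y | S.d 1 (y : G) ≤ R}
  have hword : ∀ a : H, ∃ l, l.length ≤ K * wordLength S.gens (a : G) + K ∧ IsWordOver Y l ∧
      l.prod = a := fun a => by
    obtain ⟨l, hl, hlY, hla⟩ := hR a a.2
    exact ⟨l, by simpa [d, wordDist] using hl, hlY, Subtype.ext (by simpa using hla)⟩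
  have hY : IsSymmGen Y := by
    refine ⟨(finite_ball (S := S) 1 R).preimage Subtype.val_injective.injOn, fun y hy => ?_, ?_⟩
    · have : S.d 1 ((y⁻¹ : H) : G) = S.d 1 (y : G) := by
        rw [← d_mul_left (S := S) (y : G), d_comm]
        simp
      exact this.trans_le hy
    · refine eq_top_iff.2 fun a _ => ?_
      obtain ⟨l, -, hlY, rfl⟩ := hword a
      exact hlY.prod_mem_closure
  refine ⟨Y, hY, S.gens, isSymmGen_gens, K + 1, by positivity, fun a => ?_⟩
  obtain ⟨l, hl, hlY, rfl⟩ := hword a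
  have hle : (wordLength Y l.prod : ℝ) ≤ K * wordLength S.gens (l.prod : G) + K := by
    exact_mod_cast hlY.wordLength_prod_le.trans hl
  linarith [Nat.cast_nonneg (α := ℝ) (wordLength S.gens (l.prod : G))]

end CyclicAmalgam

/-! ### Free groups -/

section ProperPower

variable {G : Type u} [Group G]

theorem natAbs_eq_one_of_zpow_eq {u z : G} (hu : u ≠ 1)
    (hunp : ¬ ∃ (z : G) (n : ℕ), 2 ≤ n ∧ z ^ n = u) {n : ℤ} (h : z ^ n = u) : n.natAbs = 1 := by
  have hn : n ≠ 0 := fun hn => hu (by rw [← h, hn, zpow_zero])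
  have hlt : ¬ 2 ≤ n.natAbs := fun h2 => hunp <| by
    rcases Int.natAbs_eq n with hs | hs
    · exact ⟨z, n.natAbs, h2, by rw [← zpow_natCast, ← hs, h]⟩
    · exact ⟨z⁻¹, n.natAbs, h2, by rw [← zpow_natCast, inv_zpow', ← hs, h]⟩
  omega

theorem commute_of_commute_zpow_left [IsMulTorsionFree G] {x y : G} {n : ℤ} (hn : n ≠ 0)
    (h : Commute (x ^ n) y) : Commute x y := by
  refine Commute.symm (mul_inv_eq_iff_eq_mul.1 (zpow_left_injective hn ?_))
  change (y * x * y⁻¹) ^ n = x ^ n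
  rw [conj_zpow, h.symm.eq, mul_inv_cancel_right]

end ProperPower

section Commute

variable {α : Type u}

theorem isCyclic_of_isFreeGroup_of_isMulCommutative (F : Type u) [Group F] [IsFreeGroup F]
    [IsMulCommutative F] : IsCyclic F := by
  classical
  let e := IsFreeGroup.toFreeGroup F
  have hsub : Subsingleton (IsFreeGroup.Generators F) := by
    refine ⟨fun a b => by_contra fun hab => ?_⟩
    have h : FreeGroup.of a * FreeGroup.of b = FreeGroup.of b * FreeGroup.of a :=
      e.symm.injective (by rw [map_mul, map_mul, mul_comm'])
    simpa [FreeGroup.toWord_mul, FreeGroup.reduce, hab] using congrArg FreeGroup.toWord h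
  rcases isEmpty_or_nonempty (IsFreeGroup.Generators F) with h | ⟨⟨a⟩⟩
  · have := e.toEquiv.subsingleton
    infer_instance
  · let : Unique (IsFreeGroup.Generators F) := ⟨⟨a⟩, fun _ => Subsingleton.elim _ _⟩
    exact (e.trans FreeGroup.mulEquivIntOfUnique).isCyclic.2 inferInstance

theorem exists_mem_zpowers_of_commute {x y : FreeGroup α} (h : Commute x y) :
    ∃ z : FreeGroup α, x ∈ Subgroup.zpowers z ∧ y ∈ Subgroup.zpowers z := by
  have : IsMulCommutative (Subgroup.closure {x, y}) := Subgroup.isMulCommutative_closure (by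
    rintro a (rfl | rfl) b (rfl | rfl)
    exacts [rfl, h, h.symm, rfl])
  obtain ⟨z, hz⟩ := (Subgroup.isCyclic_iff_exists_zpowers_eq_top _).1
    (isCyclic_of_isFreeGroup_of_isMulCommutative (Subgroup.closure {x, y}))
  exact ⟨z, hz ▸ Subgroup.subset_closure (by simp), hz ▸ Subgroup.subset_closure (by simp)⟩

theorem mem_zpowers_of_commute {u x : FreeGroup α} (hu : u ≠ 1)
    (hunp : ¬ ∃ (z : FreeGroup α) (n : ℕ), 2 ≤ n ∧ z ^ n = u) (h : Commute x u) :
    x ∈ Subgroup.zpowers u := by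
  obtain ⟨z, hx, n, hn⟩ := exists_mem_zpowers_of_commute h
  replace hn : z ^ n = u := hn
  suffices hz : z ∈ Subgroup.zpowers u from Subgroup.zpowers_le.2 hz hx
  rcases Int.natAbs_eq_iff.1 (natAbs_eq_one_of_zpow_eq hu hunp hn) with rfl | rfl
  · exact ⟨1, by simp [← hn]⟩
  · exact ⟨-1, by simp [← hn]⟩

theorem conj_mem_zpowers_of_conj_zpow {u x : FreeGroup α} (hu : u ≠ 1)
    (hunp : ¬ ∃ (z : FreeGroup α) (n : ℕ), 2 ≤ n ∧ z ^ n = u) {n m : ℤ} (hn : n ≠ 0)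
    (h : x * u ^ n * x⁻¹ = u ^ m) : x * u * x⁻¹ ∈ Subgroup.zpowers u := by
  refine mem_zpowers_of_commute hu hunp (commute_of_commute_zpow_left hn ?_)
  rw [conj_zpow, h]
  exact (Commute.refl u).zpow_left m

theorem mem_zpowers_of_conj_zpow {u x : FreeGroup α} (hu : u ≠ 1)
    (hunp : ¬ ∃ (z : FreeGroup α) (n : ℕ), 2 ≤ n ∧ z ^ n = u) {n m : ℤ} (hn : n ≠ 0)
    (h : x * u ^ n * x⁻¹ = u ^ m) : x ∈ Subgroup.zpowers u := by
  have hm : m ≠ 0 := by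
    rintro rfl
    rw [zpow_zero, conj_eq_one_iff, IsMulTorsionFree.zpow_eq_one_iff_left hn] at h
    exact hu h
  have h' : x⁻¹ * u ^ m * x⁻¹⁻¹ = u ^ n := by rw [← h]; group
  obtain ⟨k, hk⟩ := conj_mem_zpowers_of_conj_zpow hu hunp hn h
  obtain ⟨l, hl⟩ := conj_mem_zpowers_of_conj_zpow hu hunp hm h'
  replace hk : u ^ k = x * u * x⁻¹ := hk
  replace hl : u ^ l = x⁻¹ * u * x⁻¹⁻¹ := hl
  have hlk : u ^ (l * k - 1) = 1 := by
    rw [zpow_sub_one, zpow_mul, hl, conj_zpow, hk]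
    group
  have hk1 : k * k = 1 := Int.isUnit_mul_self
    (.of_mul_eq_one_right l (sub_eq_zero.1 ((IsMulTorsionFree.zpow_eq_one_iff_right hu).1 hlk)))
  have hsq : Commute (x ^ (2 : ℤ)) u := by
    refine mul_inv_eq_iff_eq_mul.1 ?_
    calc x ^ (2 : ℤ) * u * (x ^ (2 : ℤ))⁻¹ = x * (x * u * x⁻¹) * x⁻¹ := by
          rw [zpow_two, mul_inv_rev]; simp only [mul_assoc]
      _ = u := by rw [← hk, ← conj_zpow, ← hk, ← zpow_mul, hk1, zpow_one]
  exact mem_zpowers_of_commute hu hunp (commute_of_commute_zpow_left two_ne_zero hsq)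

end Commute

section ReducedWord

variable {α : Type u}

theorem freeGroup_isReduced_invRev {l : List (α × Bool)} (hl : FreeGroup.IsReduced l) :
    FreeGroup.IsReduced (FreeGroup.invRev l) := by
  classical
  rw [FreeGroup.isReduced_iff_reduce_eq, FreeGroup.reduce_invRev, hl.reduce_eq]

theorem freeGroup_isReduced_invRev_append {a b : α × Bool} {l m : List (α × Bool)}
    (hl : FreeGroup.IsReduced (a :: l)) (hm : FreeGroup.IsReduced (b :: m)) (hab : a ≠ b) :
    FreeGroup.IsReduced (FreeGroup.invRev (a :: l) ++ b :: m) := by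
  refine List.isChain_append.2 ⟨freeGroup_isReduced_invRev hl, hm, ?_⟩
  obtain ⟨a, s⟩ := a
  obtain ⟨b, t⟩ := b
  cases s <;> cases t <;> simp_all [FreeGroup.invRev]

end ReducedWord

section Norm

variable {α : Type u} [DecidableEq α]

/-- The length of the longest common prefix of two lists. -/
def commonPrefixLength : List α → List α → ℕ
  | a :: l, b :: m => if a = b then commonPrefixLength l m + 1 else 0
  | _, _ => 0

theorem min_commonPrefixLength_le (l m n : List α) :
    min (commonPrefixLength l m) (commonPrefixLength m n) ≤ commonPrefixLength l n := by
  induction l generalizing m n with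
  | nil => simp [commonPrefixLength]
  | cons a l ih =>
    rcases m with _ | ⟨b, m⟩
    · simp [commonPrefixLength]
    rcases n with _ | ⟨c, n⟩
    · simp [commonPrefixLength]
    by_cases hab : a = b <;> by_cases hbc : b = c
    · subst hab hbc
      simpa [commonPrefixLength, ← Nat.succ_min_succ] using ih m n
    · simp [commonPrefixLength, hbc]
    all_goals simp only [commonPrefixLength, if_neg hab, Nat.zero_min, Nat.zero_le]

theorem freeGroup_norm_mk {l : List (α × Bool)} (hl : FreeGroup.IsReduced l) :
    (FreeGroup.mk l).norm = l.length := by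
  rw [FreeGroup.norm, FreeGroup.toWord_mk, hl.reduce_eq]

theorem freeGroup_norm_mk_inv_mul_mk {l m : List (α × Bool)} (hl : FreeGroup.IsReduced l)
    (hm : FreeGroup.IsReduced m) :
    ((FreeGroup.mk l)⁻¹ * FreeGroup.mk m).norm + 2 * commonPrefixLength l m =
      l.length + m.length := by
  induction l generalizing m with
  | nil => simp [commonPrefixLength, ← FreeGroup.one_eq_mk, freeGroup_norm_mk hm]
  | cons a l ih =>
    rcases m with _ | ⟨b, m⟩
    · simp [commonPrefixLength, ← FreeGroup.one_eq_mk, FreeGroup.norm_inv_eq,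
        freeGroup_norm_mk hl, -FreeGroup.inv_mk]
    by_cases hab : a = b
    · subst hab
      have hmk (n : List (α × Bool)) :
          FreeGroup.mk (a :: n) = FreeGroup.mk [a] * FreeGroup.mk n := by
        rw [FreeGroup.mul_mk, List.singleton_append]
      have ih := ih (m := m) (List.IsChain.tail hl) (List.IsChain.tail hm)
      rw [hmk l, hmk m, mul_inv_rev, mul_assoc, inv_mul_cancel_left]
      simp only [commonPrefixLength, if_true, List.length_cons]
      omega
    · rw [FreeGroup.inv_mk, FreeGroup.mul_mk,
        freeGroup_norm_mk (freeGroup_isReduced_invRev_append hl hm hab)]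
      simp [commonPrefixLength, hab]

theorem freeGroup_norm_inv_mul (x y : FreeGroup α) :
    (x⁻¹ * y).norm + 2 * commonPrefixLength x.toWord y.toWord = x.norm + y.norm := by
  have h := freeGroup_norm_mk_inv_mul_mk (FreeGroup.isReduced_toWord (x := x))
    (FreeGroup.isReduced_toWord (x := y))
  rwa [FreeGroup.mk_toWord, FreeGroup.mk_toWord] at h

theorem freeGroup_fourPoint_norm (x y z w : FreeGroup α) :
    FourPoint (fun a b : FreeGroup α => (a⁻¹ * b).norm) 0 x y z w := by
  suffices h : ∀ y z w : FreeGroup α,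
      FourPoint (fun a b : FreeGroup α => (a⁻¹ * b).norm) 0 1 y z w by
    simpa [FourPoint, mul_assoc] using h (x⁻¹ * y) (x⁻¹ * z) (x⁻¹ * w)
  intro y z w
  have hyw := freeGroup_norm_inv_mul y w
  have hzw := freeGroup_norm_inv_mul z w
  have hyz := freeGroup_norm_inv_mul y z
  have hmin := min_commonPrefixLength_le y.toWord z.toWord w.toWord
  simp only [fourPoint_iff, inv_one, one_mul]
  omega

theorem freeGroup_norm_zpow {x : FreeGroup α} (hx : FreeGroup.IsCyclicallyReduced x.toWord)
    (n : ℤ) : (x ^ n).norm = n.natAbs * x.norm := by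
  have hpow (k : ℕ) : (x ^ k).norm = k * x.norm := by
    rw [FreeGroup.norm, FreeGroup.toWord_pow, (hx.flatten_replicate k).isReduced.reduce_eq]
    simp [FreeGroup.norm]
  rcases Int.natAbs_eq n with h | h
  · rw [h, zpow_natCast, hpow, Int.natAbs_natCast]
  · rw [h, zpow_neg, zpow_natCast, FreeGroup.norm_inv_eq, hpow, Int.natAbs_neg, Int.natAbs_natCast]

theorem exists_conj_isCyclicallyReduced (x : FreeGroup α) :
    ∃ t y : FreeGroup α, t * y * t⁻¹ = x ∧ FreeGroup.IsCyclicallyReduced y.toWord := by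
  have hred := FreeGroup.reduceCyclically.isCyclicallyReduced
    (FreeGroup.isReduced_toWord (x := x))
  refine ⟨FreeGroup.mk (FreeGroup.reduceCyclically.conjugator x.toWord),
    FreeGroup.mk (FreeGroup.reduceCyclically x.toWord), ?_, ?_⟩
  · rw [FreeGroup.inv_mk, FreeGroup.mul_mk, FreeGroup.mul_mk,
      FreeGroup.reduceCyclically.conj_conjugator_reduceCyclically, FreeGroup.mk_toWord]
  · rwa [FreeGroup.toWord_mk, hred.isReduced.reduce_eq]

variable (α) in
/-- The ball of radius `L` around the identity of a free group, used as a generating set. -/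
def normBall (L : ℕ) : Set (FreeGroup α) := {x | x.norm ≤ L}

theorem finite_normBall [Finite α] (L : ℕ) : (normBall α L).Finite :=
  ((List.finite_length_le (α × Bool) L).image FreeGroup.mk).subset
    fun x hx => ⟨x.toWord, hx, FreeGroup.mk_toWord⟩

theorem inv_mem_normBall {L : ℕ} : ∀ x ∈ normBall α L, x⁻¹ ∈ normBall α L :=
  fun _ hx => FreeGroup.norm_inv_eq.trans_le hx

theorem IsWordOver.norm_prod_le {L : ℕ} {l : List (FreeGroup α)}
    (hl : IsWordOver (normBall α L) l) : l.prod.norm ≤ L * l.length := by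
  induction l with
  | nil => simp
  | cons a l ih =>
    obtain ⟨ha, hl⟩ := List.forall_mem_cons.1 hl
    calc (a :: l).prod.norm ≤ a.norm + l.prod.norm := by
          rw [List.prod_cons]; exact FreeGroup.norm_mul_le a l.prod
      _ ≤ L + L * l.length := Nat.add_le_add ha (ih hl)
      _ = L * (a :: l).length := by rw [List.length_cons]; ring

theorem exists_isWordOver_normBall {L : ℕ} (hL : 0 < L) (x : FreeGroup α) :
    ∃ l, IsWordOver (normBall α L) l ∧ l.prod = x ∧ L * l.length < x.norm + L := by
  induction hn : x.norm using Nat.strong_induction_on generalizing x with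
  | _ n ih =>
    rcases Nat.eq_zero_or_pos n with rfl | hpos
    · exact ⟨[], by simp [IsWordOver], by simp [FreeGroup.norm_eq_zero.1 hn], by simpa using hL⟩
    have hhead : (FreeGroup.mk (x.toWord.take L)).norm ≤ L :=
      FreeGroup.norm_mk_le.trans (List.length_take_le _ _)
    have htail : (FreeGroup.mk (x.toWord.drop L)).norm ≤ n - L :=
      FreeGroup.norm_mk_le.trans (by simp [← hn, FreeGroup.norm])
    by_cases hle : n ≤ L
    · exact ⟨[x], by simp [IsWordOver, normBall, hn, hle], by simp, by simpa using hpos⟩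
    obtain ⟨l, hl, hprod, hlen⟩ := ih _ (by omega) (FreeGroup.mk (x.toWord.drop L)) rfl
    refine ⟨FreeGroup.mk (x.toWord.take L) :: l, List.forall_mem_cons.2 ⟨hhead, hl⟩, ?_, ?_⟩
    · rw [List.prod_cons, hprod, FreeGroup.mul_mk, List.take_append_drop, FreeGroup.mk_toWord]
    · rw [List.length_cons, mul_add, mul_one]
      omega

theorem closure_normBall {L : ℕ} (hL : 0 < L) : Subgroup.closure (normBall α L) = ⊤ := by
  refine eq_top_iff.2 fun x _ => ?_
  obtain ⟨l, hl, rfl, -⟩ := exists_isWordOver_normBall hL x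
  exact hl.prod_mem_closure

theorem norm_le_wordLength_normBall {L : ℕ} (hL : 0 < L) (x : FreeGroup α) :
    x.norm ≤ L * wordLength (normBall α L) x := by
  obtain ⟨l, ⟨hl, hlen⟩, rfl⟩ := exists_isGeodesicWord (inv_mem_normBall (L := L))
    (show x ∈ Subgroup.closure (normBall α L) by simp [closure_normBall hL])
  exact hlen ▸ hl.norm_prod_le

theorem wordLength_normBall_lt {L : ℕ} (hL : 0 < L) (x : FreeGroup α) :
    L * wordLength (normBall α L) x < x.norm + L := by
  obtain ⟨l, hl, rfl, hlen⟩ := exists_isWordOver_normBall hL x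
  exact (Nat.mul_le_mul_left L hl.wordLength_prod_le).trans_lt hlen

theorem wordLength_normBall_zpow {x : FreeGroup α}
    (hx : FreeGroup.IsCyclicallyReduced x.toWord) (hpos : 0 < x.norm) (n : ℤ) :
    wordLength (normBall α x.norm) (x ^ n) = n.natAbs := by
  have hle := norm_le_wordLength_normBall hpos (x ^ n)
  have hlt := wordLength_normBall_lt hpos (x ^ n)
  rw [freeGroup_norm_zpow hx] at hle hlt
  exact le_antisymm
    (Nat.le_of_lt_succ (Nat.lt_of_mul_lt_mul_left (a := x.norm) (by linarith)))
    (Nat.le_of_mul_le_mul_left (c := x.norm) (by linarith) hpos)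

end Norm

/-! ### Amalgamated products of free groups over an infinite cyclic group -/

theorem IsAmalgamOverZ.comp_mulEquiv {A A' : Type u} {B B' : Type v} {G : Type w} [Group A]
    [Group A'] [Group B] [Group B'] [Group G] {ια : A →* G} {ιβ : B →* G} (a : A' ≃* A)
    (b : B' ≃* B) {x : A'} {y : B'} (h : IsAmalgamOverZ ια ιβ (a x) (b y)) :
    IsAmalgamOverZ (ια.comp a.toMonoidHom) (ιβ.comp b.toMonoidHom) x y where
  comm := h.comm
  gen := by
    rw [MonoidHom.range_comp, MonoidHom.range_comp, MonoidHom.range_eq_top.2 a.surjective,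
      MonoidHom.range_eq_top.2 b.surjective, ← MonoidHom.range_eq_map, ← MonoidHom.range_eq_map,
      h.gen]
  univ K _ f g hfg := by
    obtain ⟨k, hkf, hkg⟩ := h.univ K (f.comp a.symm.toMonoidHom) (g.comp b.symm.toMonoidHom)
      (by simpa using hfg)
    exact ⟨k, MonoidHom.ext fun z => by simpa using DFunLike.congr_fun hkf (a z),
      MonoidHom.ext fun z => by simpa using DFunLike.congr_fun hkg (b z)⟩

theorem zpowersHom_injective {G : Type u} [Group G] [IsMulTorsionFree G] {g : G} (hg : g ≠ 1) :
    Function.Injective (zpowersHom G g) := by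
  refine (injective_iff_map_eq_one _).2 fun n hn => ?_
  rw [zpowersHom_apply, IsMulTorsionFree.zpow_eq_one_iff_right hg] at hn
  exact hn

namespace IsAmalgamOverZ

open Monoid

variable {F : Bool → Type u} [∀ i, Group (F i)] {e : ∀ i, F i} {G : Type u} [Group G]
  {ι : ∀ i, F i →* G}

theorem exists_toPushoutI (h : IsAmalgamOverZ (ι true) (ι false) (e true) (e false)) :
    ∃ π : G →* PushoutI fun i => zpowersHom (F i) (e i), ∀ i a, π (ι i a) = PushoutI.of i a := by
  have hbase (i : Bool) : PushoutI.of (φ := fun i => zpowersHom (F i) (e i)) i (e i) =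
      PushoutI.base _ (Multiplicative.ofAdd 1) := by
    rw [← PushoutI.of_apply_eq_base _ i]
    simp [zpowersHom_apply]
  obtain ⟨π, ht, hf⟩ := h.univ (PushoutI fun i => zpowersHom (F i) (e i)) (PushoutI.of true)
    (PushoutI.of false) ((hbase true).trans (hbase false).symm)
  exact ⟨π, Bool.rec (DFunLike.congr_fun hf) (DFunLike.congr_fun ht)⟩

/-- The comparison map to the amalgamated product. -/
noncomputable def toPushoutI (h : IsAmalgamOverZ (ι true) (ι false) (e true) (e false)) :
    G →* PushoutI fun i => zpowersHom (F i) (e i) :=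
  h.exists_toPushoutI.choose

theorem toPushoutI_ι (h : IsAmalgamOverZ (ι true) (ι false) (e true) (e false)) (i : Bool)
    (a : F i) : h.toPushoutI (ι i a) = PushoutI.of i a :=
  h.exists_toPushoutI.choose_spec i a

theorem ι_e_eq (h : IsAmalgamOverZ (ι true) (ι false) (e true) (e false)) (i : Bool) :
    ι i (e i) = ι true (e true) := by
  cases i
  · exact h.comm.symm
  · rfl

theorem ι_zpow_e (h : IsAmalgamOverZ (ι true) (ι false) (e true) (e false)) (i : Bool) (n : ℤ) :
    ι i (e i ^ n) = ι true (e true) ^ n := by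
  rw [map_zpow, h.ι_e_eq]

theorem toPushoutI_zpow (h : IsAmalgamOverZ (ι true) (ι false) (e true) (e false)) (n : ℤ) :
    h.toPushoutI (ι true (e true) ^ n) =
      PushoutI.base (fun i => zpowersHom (F i) (e i)) (Multiplicative.ofAdd n) := by
  rw [← map_zpow, h.toPushoutI_ι, ← PushoutI.of_apply_eq_base _ true]
  simp [zpowersHom_apply]

theorem exists_notMem_range (h : IsAmalgamOverZ (ι true) (ι false) (e true) (e false)) {i : Bool}
    {a : G} (ha : a ∈ (ι i).range) (ha' : a ∉ (ι (!i)).range) :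
    ∃ b : F i, ι i b = a ∧ b ∉ (zpowersHom (F i) (e i)).range := by
  obtain ⟨b, rfl⟩ := ha
  refine ⟨b, rfl, ?_⟩
  rintro ⟨n, rfl⟩
  exact ha' ⟨e (!i) ^ n.toAdd, by rw [zpowersHom_apply, h.ι_zpow_e, h.ι_zpow_e]⟩

theorem exists_reduced (h : IsAmalgamOverZ (ι true) (ι false) (e true) (e false)) {i : Bool}
    {g : G} (hg : StartsIn (fun i => (ι i).range) i g) :
    ∃ w : CoprodI.Word F, PushoutI.Reduced (fun i => zpowersHom (F i) (e i)) w ∧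
      w.fstIdx = some i ∧ PushoutI.ofCoprodI w.prod = h.toPushoutI g := by
  classical
  induction hg with
  | @single i a ha ha' =>
    obtain ⟨b, rfl, hb⟩ := h.exists_notMem_range ha ha'
    have hb1 : b ≠ 1 := ne_of_mem_of_not_mem (one_mem _) hb |>.symm
    refine ⟨CoprodI.Word.cons b .empty (by simp [CoprodI.Word.fstIdx]) hb1,
      List.forall_mem_cons.2 ⟨hb, by simp⟩, CoprodI.Word.fstIdx_cons .., ?_⟩
    simp [CoprodI.Word.prod_cons, h.toPushoutI_ι]
  | @cons i a g ha ha' _ ih =>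
    obtain ⟨b, rfl, hb⟩ := h.exists_notMem_range ha ha'
    obtain ⟨w, hw, hwi, hwp⟩ := ih
    have hb1 : b ≠ 1 := ne_of_mem_of_not_mem (one_mem _) hb |>.symm
    refine ⟨CoprodI.Word.cons b w (by simp [hwi]) hb1, List.forall_mem_cons.2 ⟨hb, hw⟩,
      CoprodI.Word.fstIdx_cons .., ?_⟩
    simp [CoprodI.Word.prod_cons, h.toPushoutI_ι, hwp]

theorem ι_injective (h : IsAmalgamOverZ (ι true) (ι false) (e true) (e false))
    (he : ∀ i, Function.Injective (zpowersHom (F i) (e i))) (i : Bool) :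
    Function.Injective (ι i) := fun a b hab => by
  have hab' := congrArg h.toPushoutI hab
  rw [h.toPushoutI_ι, h.toPushoutI_ι] at hab'
  exact PushoutI.of_injective he i hab'

theorem range_inf_range_le (h : IsAmalgamOverZ (ι true) (ι false) (e true) (e false))
    (he : ∀ i, Function.Injective (zpowersHom (F i) (e i))) :
    (ι true).range ⊓ (ι false).range ≤ Subgroup.zpowers (ι true (e true)) := by
  rintro _ ⟨⟨a, rfl⟩, b, hb⟩
  have hbase : PushoutI.of (φ := fun i => zpowersHom (F i) (e i)) true a ∈
      (PushoutI.base fun i => zpowersHom (F i) (e i)).range := by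
    rw [← PushoutI.inf_of_range_eq_base_range he (i := true) (j := false) (by decide)]
    exact ⟨⟨a, rfl⟩, b, by rw [← h.toPushoutI_ι, ← h.toPushoutI_ι, hb]⟩
  obtain ⟨n, hn⟩ := hbase
  rw [← PushoutI.of_apply_eq_base _ true] at hn
  rw [← PushoutI.of_injective he true hn]
  exact ⟨n.toAdd, by simp [zpowersHom_apply]⟩

theorem not_startsIn_false (h : IsAmalgamOverZ (ι true) (ι false) (e true) (e false))
    (he : ∀ i, Function.Injective (zpowersHom (F i) (e i))) {g : G}
    (hg : StartsIn (fun i => (ι i).range) true g) :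
    ¬ StartsIn (fun i => (ι i).range) false g := fun hg' => by
  obtain ⟨w, hw, hwi, hwp⟩ := h.exists_reduced hg
  obtain ⟨w', hw', hwi', hwp'⟩ := h.exists_reduced hg'
  obtain ⟨d⟩ := PushoutI.NormalWord.transversal_nonempty _ he
  obtain ⟨x, hx, hxm⟩ := hw.exists_normalWord_prod_eq d
  obtain ⟨y, hy, hym⟩ := hw'.exists_normalWord_prod_eq d
  obtain rfl : x = y := PushoutI.NormalWord.prod_injective (by rw [hx, hy, hwp, hwp'])
  rw [CoprodI.Word.fstIdx, ← List.head?_map, ← hxm, hym, List.head?_map,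
    ← CoprodI.Word.fstIdx, hwi'] at hwi
  simp at hwi

theorem notMem_zpowers (h : IsAmalgamOverZ (ι true) (ι false) (e true) (e false))
    (he : ∀ i, Function.Injective (zpowersHom (F i) (e i))) {i : Bool} {g : G}
    (hg : StartsIn (fun i => (ι i).range) i g) : g ∉ Subgroup.zpowers (ι true (e true)) := by
  rintro ⟨n, rfl⟩
  obtain ⟨w, hw, hwi, hwp⟩ := h.exists_reduced hg
  obtain rfl := hw.eq_empty_of_mem_range he
    (by rw [hwp]; exact ⟨_, (h.toPushoutI_zpow n).symm⟩)
  simp [CoprodI.Word.fstIdx, CoprodI.Word.empty] at hwi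

end IsAmalgamOverZ

section FreeFactors

variable {α : Bool → Type u} [∀ i, Finite (α i)] {e : ∀ i, FreeGroup (α i)} {G : Type u} [Group G]
  {ι : ∀ i, FreeGroup (α i) →* G}

/-- The amalgamated product of two free groups over an infinite cyclic group, with the images of
norm balls as generating sets of the factors. -/
noncomputable def IsAmalgamOverZ.cyclicAmalgam [∀ i, DecidableEq (α i)]
    (h : IsAmalgamOverZ (ι true) (ι false) (e true) (e false)) (he : ∀ i, e i ≠ 1)
    (hnp : ¬ ∃ (z : FreeGroup (α true)) (m : ℕ), 2 ≤ m ∧ z ^ m = e true)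
    (hred : ∀ i, FreeGroup.IsCyclicallyReduced (e i).toWord) : CyclicAmalgam G :=
  have hzpowers := fun i => zpowersHom_injective (he i)
  have hι := h.ι_injective hzpowers
  have hpos := fun i => Nat.pos_of_ne_zero (FreeGroup.norm_eq_zero.not.2 (he i))
  have hinv : ∀ i a, Function.invFun (ι i) (ι i a) = a := fun i =>
    Function.leftInverse_invFun (hι i)
  { V := fun i => (ι i).range
    c := ι true (e true)
    X := fun i => ι i '' normBall _ (e i).norm
    treeLength := fun i g => (Function.invFun (ι i) g).norm
    scale := fun i => (e i).norm
    inf_le := h.range_inf_range_le hzpowers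
    sup_eq_top := h.gen
    not_startsIn_false := fun _ => h.not_startsIn_false hzpowers
    notMem_zpowers := fun _ _ => h.notMem_zpowers hzpowers
    malnormal := by
      rintro _ ⟨b, rfl⟩ n m hn hb
      rw [← map_zpow, ← map_zpow, ← map_inv, ← map_mul, ← map_mul] at hb
      rw [← MonoidHom.map_zpowers]
      exact Subgroup.mem_map_of_mem _ (mem_zpowers_of_conj_zpow (he true) hnp hn (hι true hb))
    finite_X := fun i => (finite_normBall _).image _
    inv_mem_X := by
      rintro i _ ⟨x, hx, rfl⟩
      exact ⟨x⁻¹, inv_mem_normBall x hx, map_inv _ _⟩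
    closure_X := fun i => by
      rw [← MonoidHom.map_closure, closure_normBall (hpos i), ← MonoidHom.range_eq_map]
    c_mem_X := fun i => ⟨e i, le_refl (e i).norm, h.ι_e_eq i⟩
    wordLength_zpow := fun i n => by
      rw [← h.ι_zpow_e i, wordLength_image (hι i), wordLength_normBall_zpow (hred i) (hpos i)]
    fourPoint_treeLength := by
      rintro i _ ⟨x, rfl⟩ _ ⟨y, rfl⟩ _ ⟨z, rfl⟩ _ ⟨w, rfl⟩
      simpa only [FourPoint, ← map_inv, ← map_mul, hinv] using freeGroup_fourPoint_norm x y z w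
    scale_pos := hpos
    treeLength_le := by
      rintro i _ ⟨a, rfl⟩
      rw [hinv, wordLength_image (hι i)]
      exact norm_le_wordLength_normBall (hpos i) a
    le_treeLength := by
      rintro i _ ⟨a, rfl⟩
      rw [hinv, wordLength_image (hι i)]
      exact (wordLength_normBall_lt (hpos i) a).le }

theorem IsAmalgamOverZ.nonempty_cyclicAmalgam
    (h : IsAmalgamOverZ (ι true) (ι false) (e true) (e false)) (he : ∀ i, e i ≠ 1)
    (hnp : ¬ ∃ (z : FreeGroup (α true)) (m : ℕ), 2 ≤ m ∧ z ^ m = e true) :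
    Nonempty (CyclicAmalgam G) := by
  classical
  choose t y hty hy using fun i => exists_conj_isCyclicallyReduced (e i)
  let conj (i : Bool) : FreeGroup (α i) ≃* FreeGroup (α i) := MulAut.conj (t i)
  have hconj : ∀ i, conj i (y i) = e i := hty
  have h' : IsAmalgamOverZ (ι true) (ι false) (conj true (y true)) (conj false (y false)) := by
    rwa [hconj, hconj]
  refine ⟨(h'.comp_mulEquiv.cyclicAmalgam (ι := fun i => (ι i).comp (conj i).toMonoidHom)
    (fun i hi => he i ?_) ?_ hy)⟩
  · rw [← hconj, hi, map_one]
  · rintro ⟨z, m, hm, hz⟩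
    exact hnp ⟨conj true z, m, hm, by rw [← map_pow, hz, hconj]⟩

end FreeFactors

theorem isAmalgamOverZ_presentedGroup {α : Type u} {β : Type v} (v : FreeGroup α)
    (u : FreeGroup β) :
    let rels : Set (FreeGroup (α ⊕ β)) := {FreeGroup.map Sum.inl v * FreeGroup.map Sum.inr u}
    IsAmalgamOverZ ((PresentedGroup.mk rels).comp (FreeGroup.map Sum.inr))
      ((PresentedGroup.mk rels).comp (FreeGroup.map Sum.inl)) u v⁻¹ := by
  intro rels
  refine ⟨?_, ?_, fun K _ f g hfg => ?_⟩
  · have hrel : PresentedGroup.mk rels (FreeGroup.map Sum.inl v * FreeGroup.map Sum.inr u) = 1 :=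
      PresentedGroup.one_of_mem rfl
    rw [map_mul, ← inv_eq_iff_mul_eq_one] at hrel
    simpa using hrel.symm
  · rw [eq_top_iff, ← PresentedGroup.closure_range_of, Subgroup.closure_le]
    rintro _ ⟨a | b, rfl⟩
    · exact Subgroup.mem_sup_right ⟨FreeGroup.of a, rfl⟩
    · exact Subgroup.mem_sup_left ⟨FreeGroup.of b, rfl⟩
  · let q : α ⊕ β → K := Sum.elim (fun a => g (FreeGroup.of a)) fun b => f (FreeGroup.of b)
    have hl : (FreeGroup.lift q).comp (FreeGroup.map Sum.inl) = g := by ext; simp [q]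
    have hr : (FreeGroup.lift q).comp (FreeGroup.map Sum.inr) = f := by ext; simp [q]
    have hq : ∀ r ∈ rels, FreeGroup.lift q r = 1 := by
      rintro _ rfl
      rw [map_mul, ← MonoidHom.comp_apply, ← MonoidHom.comp_apply, hl, hr, hfg, map_inv,
        mul_inv_cancel]
    exact ⟨PresentedGroup.toGroup hq, hr, hl⟩

/-- **Corollary 5.** The one-relator group `⟨x₁,…,x_k, y₁,…,y_s ∣ vu = 1⟩`, where `u` is not
a proper power, is word hyperbolic and has property (Q). -/
theorem one_relator_propertyQ (k s : ℕ)
    (v : FreeGroup (Fin k)) (u : FreeGroup (Fin s))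
    (hv : v ≠ 1) (hu : u ≠ 1)
    (hunp : ¬ ∃ (z : FreeGroup (Fin s)) (n : ℕ), 2 ≤ n ∧ z ^ n = u) :
    IsWordHyperbolic (PresentedGroup
        ({FreeGroup.map Sum.inl v * FreeGroup.map Sum.inr u} : Set (FreeGroup (Fin k ⊕ Fin s)))) ∧
    HasPropertyQ (PresentedGroup
        ({FreeGroup.map Sum.inl v * FreeGroup.map Sum.inr u} : Set (FreeGroup (Fin k ⊕ Fin s)))) := by
  let e : ∀ i : Bool, FreeGroup (Fin (bif i then s else k)) := Bool.rec v⁻¹ u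
  have he : ∀ i, e i ≠ 1 := Bool.rec (inv_ne_one.2 hv) hu
  obtain ⟨S⟩ := IsAmalgamOverZ.nonempty_cyclicAmalgam (e := e) (ι := Bool.rec _ _)
    (isAmalgamOverZ_presentedGroup v u) he hunp
  exact ⟨S.isWordHyperbolic, S.hasPropertyQ⟩
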